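/- arXiv:cs/0510029 — 3 statements merged into one kernel-verified Lean document; each statement's English description precedes it below -/
import Mathlib

section
/- Let α and β be random variables on a finite probability space that are conditionally independent of order k, and let (u, v, w) be a triple in the rate region of (α, β). Then H(α) + H(β) ≤ v + w + (2 − 2^{−k})·u. -/
open scoped BigOperators Classical

noncomputable section

/-- Probability of an event `E` under a distribution `μ` on a finite sample space `Ω`. -/
def pr {Ω : Type} [Fintype Ω] (μ : Ω → ℝ) (E : Ω → Prop) : ℝ :=
  ∑ ω, if E ω then μ ω else 0

/-- `μ` is a probability distribution on the finite space `Ω`. -/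
def IsProb {Ω : Type} [Fintype Ω] (μ : Ω → ℝ) : Prop :=
  (∀ ω, 0 ≤ μ ω) ∧ ∑ ω, μ ω = 1

/-- Shannon entropy (base 2) of a random variable `α` on a finite probability space. -/
def ent {Ω A : Type} [Fintype Ω] (μ : Ω → ℝ) (α : Ω → A) : ℝ :=
  -∑ a ∈ Finset.univ.image α,
      pr μ (fun ω => α ω = a) * Real.logb 2 (pr μ (fun ω => α ω = a))

/-- Conditional entropy `H(α | β)`. -/
def condEnt {Ω A B : Type} [Fintype Ω] (μ : Ω → ℝ) (α : Ω → A) (β : Ω → B) : ℝ :=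
  ent μ (fun ω => (α ω, β ω)) - ent μ β

/-- Mutual information `I(α : β)`. -/
def mutualInfo {Ω A B : Type} [Fintype Ω] (μ : Ω → ℝ) (α : Ω → A) (β : Ω → B) : ℝ :=
  ent μ α + ent μ β - ent μ (fun ω => (α ω, β ω))

/-- Conditional mutual information `I(α : β | γ)`. -/
def condMutualInfo {Ω A B C : Type} [Fintype Ω] (μ : Ω → ℝ)
    (α : Ω → A) (β : Ω → B) (γ : Ω → C) : ℝ :=
  condEnt μ α γ + condEnt μ β γ - condEnt μ (fun ω => (α ω, β ω)) γ

/-- Independence of two random variables. -/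
def Indep {Ω A B : Type} [Fintype Ω] (μ : Ω → ℝ) (α : Ω → A) (β : Ω → B) : Prop :=
  ∀ (a : A) (b : B),
    pr μ (fun ω => α ω = a ∧ β ω = b) =
      pr μ (fun ω => α ω = a) * pr μ (fun ω => β ω = b)

/-- Auxiliary form of "conditionally independent of order `k`" (explicit `Fintype`):
`α` and `β` are conditionally independent of order `0` if they are independent,
and of order `k + 1` if on some finite probability space there are random variables
`α₀, β₀, α*, β*` such that `(α₀, β₀)` has the same joint distribution as `(α, β)`,
`I(α₀ : β₀ | α*) = 0`, `I(α₀ : β₀ | β*) = 0`, and `α*, β*` are conditionally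
independent of order `k`. -/
def CondIndepOrderAux : ℕ → (Ω A B : Type) → Fintype Ω → (Ω → ℝ) → (Ω → A) → (Ω → B) → Prop
  | 0, _Ω, _A, _B, iΩ, μ, α, β => @Indep _ _ _ iΩ μ α β
  | k+1, _Ω, A, B, iΩ, μ, α, β =>
      ∃ (Ω' A' B' : Type) (iΩ' : Fintype Ω') (μ' : Ω' → ℝ)
        (α₀ : Ω' → A) (β₀ : Ω' → B) (αs : Ω' → A') (βs : Ω' → B'),
        @IsProb _ iΩ' μ' ∧
        (∀ (a : A) (b : B),
          @pr _ iΩ' μ' (fun ω => α₀ ω = a ∧ β₀ ω = b) =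
            @pr _ iΩ μ (fun ω => α ω = a ∧ β ω = b)) ∧
        @condMutualInfo _ _ _ _ iΩ' μ' α₀ β₀ αs = 0 ∧
        @condMutualInfo _ _ _ _ iΩ' μ' α₀ β₀ βs = 0 ∧
        CondIndepOrderAux k Ω' A' B' iΩ' μ' αs βs

/-- Random variables `α` and `β` on a finite probability space are
conditionally independent of order `k`. -/
def CondIndepOrder {Ω A B : Type} [iΩ : Fintype Ω]
    (μ : Ω → ℝ) (α : Ω → A) (β : Ω → B) (k : ℕ) : Prop :=
  CondIndepOrderAux k Ω A B iΩ μ α β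

/-- An `m × n` joint probability matrix: nonnegative entries summing to `1`. -/
def IsJointProbMatrix {m n : ℕ} (M : Matrix (Fin m) (Fin n) ℝ) : Prop :=
  (∀ i j, 0 ≤ M i j) ∧ ∑ i, ∑ j, M i j = 1

/-- `M` is the joint probability matrix of the pair `(α, β)`. -/
def IsJointMatrixOf {Ω : Type} [Fintype Ω] {m n : ℕ} (M : Matrix (Fin m) (Fin n) ℝ)
    (μ : Ω → ℝ) (α : Ω → Fin m) (β : Ω → Fin n) : Prop :=
  ∀ i j, M i j = pr μ (fun ω => α ω = i ∧ β ω = j)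

/-- `M` is a block matrix: rows and columns can be partitioned into two nonempty
parts so that the two diagonal blocks each contain a nonzero element and all
entries outside the diagonal blocks vanish. -/
def IsBlockMatrix {m n : ℕ} (M : Matrix (Fin m) (Fin n) ℝ) : Prop :=
  ∃ (I₁ : Finset (Fin m)) (J₁ : Finset (Fin n)),
    I₁.Nonempty ∧ I₁ᶜ.Nonempty ∧ J₁.Nonempty ∧ J₁ᶜ.Nonempty ∧
    (∃ i ∈ I₁, ∃ j ∈ J₁, M i j ≠ 0) ∧
    (∃ i ∈ I₁ᶜ, ∃ j ∈ J₁ᶜ, M i j ≠ 0) ∧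
    (∀ i j, ((i ∈ I₁ ∧ j ∈ J₁ᶜ) ∨ (i ∈ I₁ᶜ ∧ j ∈ J₁)) → M i j = 0)

/-- `M` is a good matrix: the joint probability matrix of some pair of
conditionally independent random variables (of some finite order). -/
def IsGoodMatrix {m n : ℕ} (M : Matrix (Fin m) (Fin n) ℝ) : Prop :=
  ∃ (Ω : Type) (iΩ : Fintype Ω) (μ : Ω → ℝ) (α : Ω → Fin m) (β : Ω → Fin n) (k : ℕ),
    @IsProb _ iΩ μ ∧ @IsJointMatrixOf _ iΩ _ _ M μ α β ∧
    @CondIndepOrder _ _ _ iΩ μ α β k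

/-- A stochastic matrix: nonnegative entries, all row sums equal to `1`. -/
def IsStochastic {m n : ℕ} (A : Matrix (Fin m) (Fin n) ℝ) : Prop :=
  (∀ i j, 0 ≤ A i j) ∧ ∀ i, ∑ j, A i j = 1

/-- The matrix `D_ε`: diagonal entries `1/2 - ε`, off-diagonal entries `ε`. -/
def Dmat (ε : ℝ) : Matrix (Fin 2) (Fin 2) ℝ :=
  fun i j => if i = j then 1/2 - ε else ε

/-- The distribution of `n` i.i.d. trials, each distributed according to `μ`. -/
def iidMeasure {Ω : Type} [Fintype Ω] (μ : Ω → ℝ) (n : ℕ) : (Fin n → Ω) → ℝ :=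
  fun ωv => ∏ i, μ (ωv i)

/-- The sequence of `n` coordinatewise copies of a random variable. -/
def iidRV {Ω A : Type} (α : Ω → A) (n : ℕ) : (Fin n → Ω) → (Fin n → A) :=
  fun ωv i => α (ωv i)

/-- `(u, v, w)` belongs to the rate region of the pair `(α, β)`. -/
def InRateRegion {Ω A B : Type} [Fintype Ω] (μ : Ω → ℝ) (α : Ω → A) (β : Ω → B)
    (u v w : ℝ) : Prop :=
  0 ≤ u ∧ 0 ≤ v ∧ 0 ≤ w ∧
  ∀ ε > (0:ℝ), ∀ δ > (0:ℝ), ∃ n₀ : ℕ, ∀ n ≥ n₀,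
    ∃ (t : (Fin n → A) × (Fin n → B) → (Fin ⌊(u + δ) * n⌋₊ → Bool))
      (f : (Fin n → A) × (Fin n → B) → (Fin ⌊(v + δ) * n⌋₊ → Bool))
      (g : (Fin n → A) × (Fin n → B) → (Fin ⌊(w + δ) * n⌋₊ → Bool))
      (r : (Fin ⌊(u + δ) * n⌋₊ → Bool) × (Fin ⌊(v + δ) * n⌋₊ → Bool) → (Fin n → A))
      (s : (Fin ⌊(u + δ) * n⌋₊ → Bool) × (Fin ⌊(w + δ) * n⌋₊ → Bool) → (Fin n → B)),
      pr (iidMeasure μ n) (fun ωv =>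
          r (t (iidRV α n ωv, iidRV β n ωv), f (iidRV α n ωv, iidRV β n ωv)) = iidRV α n ωv)
        > 1 - ε ∧
      pr (iidMeasure μ n) (fun ωv =>
          s (t (iidRV α n ωv, iidRV β n ωv), g (iidRV α n ωv, iidRV β n ωv)) = iidRV β n ωv)
        > 1 - ε

/-- The support of a matrix: the set of positions of its nonzero entries. -/
def msupport {m n : ℕ} (M : Matrix (Fin m) (Fin n) ℝ) : Set (Fin m × Fin n) :=
  {p | M p.1 p.2 ≠ 0}

/-- An r-matrix: nonnegative entries and rectangular support. -/
def IsRMatrix {m n : ℕ} (M : Matrix (Fin m) (Fin n) ℝ) : Prop :=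
  (∀ i j, 0 ≤ M i j) ∧ ∃ (A : Set (Fin m)) (B : Set (Fin n)), msupport M = A ×ˢ B

/-- An r-decomposition of `M`: an expression of `M` as a finite sum of r-matrices
such that the supports of consecutive summands intersect. -/
def IsRDecomposition {m n : ℕ} (M : Matrix (Fin m) (Fin n) ℝ)
    (l : ℕ) (Ms : Fin l → Matrix (Fin m) (Fin n) ℝ) : Prop :=
  M = ∑ i, Ms i ∧ (∀ i, IsRMatrix (Ms i)) ∧
  ∀ (i : ℕ) (h : i + 1 < l),
    (msupport (Ms ⟨i, Nat.lt_of_succ_lt h⟩) ∩ msupport (Ms ⟨i + 1, h⟩)).Nonempty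

end

/-!
If `I(X : Y | Z) = 0` then `H(G | Z) ≤ H(G | X) + H(G | Y)` for every `G`. Conditional independence
of order `k` thus gives `H(G) ≤ 2 ^ k * (H(G | X) + H(G | Y))` by induction on `k`: the witnesses
`α*, β*` of order `k - 1` live on another space, but gluing that space to the given one along the
common distribution of `(X, Y)` puts `G`, `X`, `Y`, `α*`, `β*` on a single space. Rewriting
`H(G | X) = H(X | G) + H(G) - H(X)` turns this into
`H(X) + H(Y) ≤ H(X | G) + H(Y | G) + (2 - 2 ^ (-k)) * H(G)`.

Conditional independence of order `k` passes to i.i.d. copies, so the last inequality applies to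
`X = αⁿ`, `Y = βⁿ` and the common message `G = t(αⁿ, βⁿ)`. By Fano's inequality `H(αⁿ | t)` and
`H(βⁿ | t)` exceed the lengths of the private messages by at most `o(n)`; divide by `n`.
-/

section Probability

variable {Ω A : Type} [Fintype Ω] {μ : Ω → ℝ}

lemma IsProb.nonempty (hμ : IsProb μ) : Nonempty Ω := by
  by_contra hempty
  rw [not_nonempty_iff] at hempty
  simpa using hμ.2

lemma pr_nonneg (hμ : ∀ ω, 0 ≤ μ ω) (E : Ω → Prop) : 0 ≤ pr μ E :=
  Finset.sum_nonneg fun ω _ => ite_nonneg (hμ ω) le_rfl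

lemma pr_mono (hμ : ∀ ω, 0 ≤ μ ω) {E F : Ω → Prop} (h : ∀ ω, E ω → F ω) : pr μ E ≤ pr μ F := by
  refine Finset.sum_le_sum fun ω _ => ?_
  by_cases hE : E ω
  · simp only [hE, h ω hE, if_true, le_refl]
  · simpa only [hE, if_false] using ite_nonneg (hμ ω) le_rfl

lemma pr_congr_ae {E F : Ω → Prop} (h : ∀ ω, μ ω ≠ 0 → (E ω ↔ F ω)) : pr μ E = pr μ F := by
  refine Finset.sum_congr rfl fun ω _ => ?_
  by_cases h0 : μ ω = 0
  · simp [h0]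
  · simp [h ω h0]

lemma le_pr (hμ : ∀ ω, 0 ≤ μ ω) {E : Ω → Prop} {ω : Ω} (h : E ω) : μ ω ≤ pr μ E := by
  simpa only [pr, h, if_true] using Finset.single_le_sum (f := fun ω => if E ω then μ ω else 0)
    (fun ω _ => ite_nonneg (hμ ω) le_rfl) (Finset.mem_univ ω)

lemma pr_true (hμ : IsProb μ) : pr μ (fun _ => True) = 1 := by
  simpa only [pr, if_true] using hμ.2

lemma sum_mul_comp (μ : Ω → ℝ) {X : Ω → A} {S : Finset A} (hS : ∀ ω, X ω ∈ S) (F : A → ℝ) :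
    ∑ ω, μ ω * F (X ω) = ∑ a ∈ S, pr μ (fun ω => X ω = a) * F a := by
  simp only [pr, Finset.sum_mul, ite_mul, zero_mul]
  rw [Finset.sum_comm]
  refine Finset.sum_congr rfl fun ω _ => ?_
  rw [Finset.sum_ite_eq, if_pos (hS ω)]

lemma sum_pr_eq_and (μ : Ω → ℝ) {X : Ω → A} {S : Finset A} (hS : ∀ ω, X ω ∈ S) (E : Ω → Prop) :
    ∑ a ∈ S, pr μ (fun ω => X ω = a ∧ E ω) = pr μ E := by
  simp only [pr]
  rw [Finset.sum_comm]
  refine Finset.sum_congr rfl fun ω _ => ?_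
  by_cases hE : E ω <;> simp [hE, hS ω]

lemma sum_pr_eq (hμ : IsProb μ) {X : Ω → A} {S : Finset A} (hS : ∀ ω, X ω ∈ S) :
    ∑ a ∈ S, pr μ (fun ω => X ω = a) = 1 := by
  simpa only [and_true, pr_true hμ] using sum_pr_eq_and μ hS (fun _ => True)

/-- The probability of the value that `X` takes at the outcome `ω`, so that the entropy of `X` is
the mean of `-logb 2 (valuePr μ X ω)`. -/
noncomputable def valuePr (μ : Ω → ℝ) (X : Ω → A) (ω : Ω) : ℝ := pr μ (fun ω' => X ω' = X ω)

lemma valuePr_pos (hμ : ∀ ω, 0 ≤ μ ω) (X : Ω → A) {ω : Ω} (h : μ ω ≠ 0) : 0 < valuePr μ X ω :=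
  ((hμ ω).lt_of_ne' h).trans_le (le_pr hμ rfl)

lemma div_valuePr_mul_valuePr (hμ : ∀ ω, 0 ≤ μ ω) (X : Ω → A) (ω : Ω) :
    μ ω / valuePr μ X ω * valuePr μ X ω = μ ω := by
  by_cases h0 : μ ω = 0
  · simp [h0]
  · exact div_mul_cancel₀ _ (valuePr_pos hμ X h0).ne'

end Probability

section Entropy

variable {Ω A B C : Type} [Fintype Ω] {μ : Ω → ℝ}

lemma ent_eq_neg_sum (μ : Ω → ℝ) (X : Ω → A) :
    ent μ X = -∑ ω, μ ω * Real.logb 2 (valuePr μ X ω) :=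
  congrArg Neg.neg (sum_mul_comp μ (fun ω => Finset.mem_image_of_mem X (Finset.mem_univ ω))
    (fun a => Real.logb 2 (pr μ (fun ω => X ω = a)))).symm

lemma ent_congr_ae {X Y : Ω → A} (h : ∀ ω, μ ω ≠ 0 → X ω = Y ω) : ent μ X = ent μ Y := by
  rw [ent_eq_neg_sum, ent_eq_neg_sum]
  congr 1
  refine Finset.sum_congr rfl fun ω _ => ?_
  by_cases h0 : μ ω = 0
  · simp [h0]
  · have hval : valuePr μ X ω = valuePr μ Y ω :=
      pr_congr_ae fun ω' h' => by rw [h ω h0, h ω' h']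
    rw [hval]

lemma ent_comp_of_injective (μ : Ω → ℝ) (X : Ω → A) {f : A → B} (hf : f.Injective) :
    ent μ (fun ω => f (X ω)) = ent μ X := by
  simp only [ent_eq_neg_sum, valuePr, hf.eq_iff]

lemma ent_comp_le (hμ : ∀ ω, 0 ≤ μ ω) (X : Ω → A) (f : A → B) :
    ent μ (fun ω => f (X ω)) ≤ ent μ X := by
  rw [ent_eq_neg_sum, ent_eq_neg_sum]
  refine neg_le_neg (Finset.sum_le_sum fun ω _ => ?_)
  by_cases h0 : μ ω = 0
  · simp [h0]
  · have hval : valuePr μ X ω ≤ valuePr μ (fun ω => f (X ω)) ω :=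
      pr_mono hμ fun _ h => congrArg f h
    exact mul_le_mul_of_nonneg_left
      (Real.logb_le_logb_of_le one_lt_two (valuePr_pos hμ X h0) hval) (hμ ω)

lemma ent_const (hμ : IsProb μ) (c : A) : ent μ (fun _ => c) = 0 := by
  simp [ent_eq_neg_sum, valuePr, pr_true hμ]

lemma ent_pair_comm (μ : Ω → ℝ) (X : Ω → A) (Y : Ω → B) :
    ent μ (fun ω => (X ω, Y ω)) = ent μ (fun ω => (Y ω, X ω)) :=
  ent_comp_of_injective μ (fun ω => (Y ω, X ω)) Prod.swap_injective

lemma mul_logb_div {m x y : ℝ} (hx : m ≠ 0 → 0 < x) (hy : m ≠ 0 → 0 < y) :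
    m * Real.logb 2 (x / y) = m * Real.logb 2 x - m * Real.logb 2 y := by
  by_cases h0 : m = 0
  · simp [h0]
  · rw [Real.logb_div (hx h0).ne' (hy h0).ne', mul_sub]

lemma condEnt_eq_neg_sum (hμ : ∀ ω, 0 ≤ μ ω) (X : Ω → A) (Y : Ω → B) :
    condEnt μ X Y =
      -∑ ω, μ ω * Real.logb 2 (valuePr μ (fun ω => (X ω, Y ω)) ω / valuePr μ Y ω) := by
  simp only [mul_logb_div (valuePr_pos hμ _) (valuePr_pos hμ _), Finset.sum_sub_distrib, condEnt,
    ent_eq_neg_sum]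
  ring

lemma condEnt_congr_ae {X X' : Ω → A} {Y Y' : Ω → B} (hX : ∀ ω, μ ω ≠ 0 → X ω = X' ω)
    (hY : ∀ ω, μ ω ≠ 0 → Y ω = Y' ω) : condEnt μ X Y = condEnt μ X' Y' := by
  rw [condEnt, condEnt, ent_congr_ae hY, ent_congr_ae fun ω h => by rw [hX ω h, hY ω h]]

lemma condEnt_comp_left_of_injective (μ : Ω → ℝ) (X : Ω → A) (Y : Ω → B) {f : A → C}
    (hf : f.Injective) : condEnt μ (fun ω => f (X ω)) Y = condEnt μ X Y := by
  rw [condEnt, condEnt, ← ent_comp_of_injective μ _ (hf.prodMap Function.injective_id)]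
  rfl

lemma condEnt_const (hμ : IsProb μ) (X : Ω → A) (c : B) : condEnt μ X (fun _ => c) = ent μ X := by
  rw [condEnt, ent_const hμ, sub_zero, ent_comp_of_injective μ X (Prod.mk_left_injective c)]

lemma ent_add_condEnt_comm (μ : Ω → ℝ) (X : Ω → A) (Y : Ω → B) :
    ent μ X + condEnt μ Y X = ent μ Y + condEnt μ X Y := by
  rw [condEnt, condEnt, ent_pair_comm μ X Y]
  ring

lemma condEnt_le_add_condEnt_pair (hμ : ∀ ω, 0 ≤ μ ω) (X : Ω → A) (Y : Ω → B) (Z : Ω → C) :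
    condEnt μ X Y ≤ condEnt μ Z Y + condEnt μ X (fun ω => (Y ω, Z ω)) := by
  have hforget : ent μ (fun ω => (X ω, Y ω)) ≤ ent μ (fun ω => (X ω, Y ω, Z ω)) :=
    ent_comp_le hμ (fun ω => (X ω, Y ω, Z ω)) (Prod.map id Prod.fst)
  simp only [condEnt, ent_pair_comm μ Z Y]
  linarith

lemma sum_mul_logb_nonpos (hμ : IsProb μ) {Q : Ω → ℝ} (hQ : ∀ ω, μ ω ≠ 0 → 0 < Q ω)
    (hsum : ∑ ω, μ ω * Q ω ≤ 1) : ∑ ω, μ ω * Real.logb 2 (Q ω) ≤ 0 := by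
  have hlog : ∀ ω, μ ω * Real.log (Q ω) ≤ μ ω * (Q ω - 1) := fun ω => by
    by_cases h0 : μ ω = 0
    · simp [h0]
    · exact mul_le_mul_of_nonneg_left (Real.log_le_sub_one_of_pos (hQ ω h0)) (hμ.1 ω)
  calc ∑ ω, μ ω * Real.logb 2 (Q ω)
      = (∑ ω, μ ω * Real.log (Q ω)) / Real.log 2 := by
        simp only [Real.logb, mul_div_assoc, Finset.sum_div]
    _ ≤ (∑ ω, μ ω * (Q ω - 1)) / Real.log 2 :=
        div_le_div_of_nonneg_right (Finset.sum_le_sum fun ω _ => hlog ω)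
          (Real.log_nonneg one_le_two)
    _ ≤ 0 := by
        refine div_nonpos_of_nonpos_of_nonneg ?_ (Real.log_nonneg one_le_two)
        simp only [mul_sub, mul_one, Finset.sum_sub_distrib, hμ.2]
        linarith

lemma sum_mul_weight_div_le_one (hμ : IsProb μ) {X : Ω → A} (Y : Ω → B) {S : Finset A}
    (hS : ∀ ω, X ω ∈ S) {q : A → B → ℝ} (hq0 : ∀ a b, 0 ≤ q a b) (hq : ∀ b, ∑ a ∈ S, q a b ≤ 1) :
    ∑ ω, μ ω * (q (X ω) (Y ω) /
      (valuePr μ (fun ω => (X ω, Y ω)) ω / valuePr μ Y ω)) ≤ 1 := by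
  let P : A × B → ℝ := fun d => pr μ (fun ω => (X ω, Y ω) = d)
  let PY : B → ℝ := fun b => pr μ (fun ω => Y ω = b)
  let T : Finset B := Finset.univ.image Y
  have hT : ∀ ω, Y ω ∈ T := fun ω => Finset.mem_image_of_mem Y (Finset.mem_univ ω)
  have hPY : ∀ b, 0 ≤ PY b := fun b => pr_nonneg hμ.1 _
  have hcancel : ∀ d : A × B, P d * (q d.1 d.2 / (P d / PY d.2)) ≤ q d.1 d.2 * PY d.2 := fun d => by
    by_cases h0 : P d = 0
    · rw [h0, zero_mul]
      exact mul_nonneg (hq0 _ _) (hPY _)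
    · rw [div_div_eq_mul_div, mul_div_cancel₀ _ h0]
  calc ∑ ω, μ ω * (q (X ω) (Y ω) / (P (X ω, Y ω) / PY (Y ω)))
      = ∑ d ∈ S ×ˢ T, P d * (q d.1 d.2 / (P d / PY d.2)) :=
        sum_mul_comp μ (fun ω => Finset.mk_mem_product (hS ω) (hT ω))
          (fun d => q d.1 d.2 / (P d / PY d.2))
    _ ≤ ∑ d ∈ S ×ˢ T, q d.1 d.2 * PY d.2 := Finset.sum_le_sum fun d _ => hcancel d
    _ = ∑ b ∈ T, (∑ a ∈ S, q a b) * PY b := by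
        simp only [Finset.sum_product_right, Finset.sum_mul]
    _ ≤ ∑ b ∈ T, PY b := Finset.sum_le_sum fun b _ => mul_le_of_le_one_left (hPY b) (hq b)
    _ = 1 := sum_pr_eq hμ hT

lemma gibbs_condEnt_le (hμ : IsProb μ) {X : Ω → A} (Y : Ω → B) {S : Finset A}
    (hS : ∀ ω, X ω ∈ S) {q : A → B → ℝ} (hq0 : ∀ a b, 0 ≤ q a b) (hq : ∀ b, ∑ a ∈ S, q a b ≤ 1)
    (hpos : ∀ ω, μ ω ≠ 0 → 0 < q (X ω) (Y ω)) :
    condEnt μ X Y ≤ -∑ ω, μ ω * Real.logb 2 (q (X ω) (Y ω)) := by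
  let R : Ω → ℝ := fun ω => valuePr μ (fun ω => (X ω, Y ω)) ω / valuePr μ Y ω
  have hR : ∀ ω, μ ω ≠ 0 → 0 < R ω := fun ω h0 =>
    div_pos (valuePr_pos hμ.1 _ h0) (valuePr_pos hμ.1 _ h0)
  have hle := sum_mul_logb_nonpos hμ (fun ω h0 => div_pos (hpos ω h0) (hR ω h0))
    (sum_mul_weight_div_le_one hμ Y hS hq0 hq)
  simp only [mul_logb_div (hpos _) (hR _), Finset.sum_sub_distrib] at hle
  rw [condEnt_eq_neg_sum hμ.1]
  linarith

lemma condEnt_le_condEnt_comp (hμ : IsProb μ) (X : Ω → A) (Y : Ω → B) (f : B → C) :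
    condEnt μ X Y ≤ condEnt μ X (fun ω => f (Y ω)) := by
  let q : A → B → ℝ := fun a b =>
    pr μ (fun ω => X ω = a ∧ f (Y ω) = f b) / pr μ (fun ω => f (Y ω) = f b)
  have hS : ∀ ω, X ω ∈ Finset.univ.image X := fun ω => Finset.mem_image_of_mem X (Finset.mem_univ ω)
  have hq : ∀ b, ∑ a ∈ Finset.univ.image X, q a b ≤ 1 := fun b => by
    rw [← Finset.sum_div, sum_pr_eq_and μ hS (fun ω => f (Y ω) = f b)]
    exact div_self_le_one _
  have hqval : ∀ ω, q (X ω) (Y ω) =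
      valuePr μ (fun ω => (X ω, f (Y ω))) ω / valuePr μ (fun ω => f (Y ω)) ω := fun ω => by
    simp only [q, valuePr, Prod.mk.injEq]
  have hgibbs := gibbs_condEnt_le (q := q) hμ Y hS
    (fun a b => div_nonneg (pr_nonneg hμ.1 _) (pr_nonneg hμ.1 _)) hq fun ω h0 => by
      rw [hqval]
      exact div_pos (valuePr_pos hμ.1 _ h0) (valuePr_pos hμ.1 _ h0)
  simpa only [hqval, ← condEnt_eq_neg_sum hμ.1] using hgibbs

lemma condEnt_le_logb_card (hμ : IsProb μ) {X : Ω → A} (Y : Ω → B) {S : Finset A}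
    (hS : ∀ ω, X ω ∈ S) : condEnt μ X Y ≤ Real.logb 2 S.card := by
  have hcard : 0 < (S.card : ℝ) := by
    obtain ⟨ω⟩ := hμ.nonempty
    exact_mod_cast Finset.card_pos.2 ⟨_, hS ω⟩
  have huniform : ∑ _a ∈ S, (S.card : ℝ)⁻¹ ≤ 1 := by
    rw [Finset.sum_const, nsmul_eq_mul, mul_inv_cancel₀ hcard.ne']
  calc condEnt μ X Y ≤ -∑ ω, μ ω * Real.logb 2 (S.card : ℝ)⁻¹ :=
        gibbs_condEnt_le hμ Y hS (fun _ _ => (inv_pos.2 hcard).le) (fun _ => huniform)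
          fun _ _ => inv_pos.2 hcard
    _ = Real.logb 2 S.card := by
        rw [← Finset.sum_mul, hμ.2, one_mul, Real.logb_inv, neg_neg]

lemma ent_le_logb_card (hμ : IsProb μ) {X : Ω → A} {S : Finset A} (hS : ∀ ω, X ω ∈ S) :
    ent μ X ≤ Real.logb 2 S.card :=
  (condEnt_const hμ X ()).symm.trans_le (condEnt_le_logb_card hμ _ hS)

/-- The weight that Fano's inequality gives to the value `a`: half of the mass sits on `guess`, the
other half is spread uniformly over `N` possible values. -/
noncomputable def fanoWeight (N : ℕ) (guess a : A) : ℝ :=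
  (if guess = a then 1 / 2 else 0) + 1 / (2 * N)

lemma fanoWeight_pos {N : ℕ} (hN : 0 < N) (guess a : A) : 0 < fanoWeight N guess a :=
  add_pos_of_nonneg_of_pos (ite_nonneg (by norm_num) le_rfl) (by positivity)

lemma sum_fanoWeight_le_one {S : Finset A} (hS : S.Nonempty) (guess : A) :
    ∑ a ∈ S, fanoWeight S.card guess a ≤ 1 := by
  have hcard : (S.card : ℝ) ≠ 0 := by exact_mod_cast hS.card_ne_zero
  have hguess : (if guess ∈ S then (1 / 2 : ℝ) else 0) ≤ 1 / 2 := by split_ifs <;> norm_num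
  have hspread : S.card * (1 / (2 * S.card : ℝ)) = 1 / 2 := by field_simp
  simp only [fanoWeight, Finset.sum_add_distrib, Finset.sum_ite_eq, Finset.sum_const, nsmul_eq_mul,
    hspread]
  linarith

lemma neg_logb_fanoWeight_le {N : ℕ} (hN : 0 < N) (guess a : A) :
    -Real.logb 2 (fanoWeight N guess a) ≤ 1 + if guess = a then 0 else Real.logb 2 N := by
  have hspread : (0 : ℝ) < 1 / (2 * N) := by positivity
  by_cases h : guess = a
  · have hhalf : Real.logb 2 (1 / 2) = -1 := by
      rw [one_div, Real.logb_inv, Real.logb_self_eq_one one_lt_two]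
    have hle : Real.logb 2 (1 / 2) ≤ Real.logb 2 (1 / 2 + 1 / (2 * N)) :=
      Real.logb_le_logb_of_le one_lt_two one_half_pos (le_add_of_nonneg_right hspread.le)
    simp only [fanoWeight, h, if_true]
    linarith
  · simp only [fanoWeight, h, if_false, zero_add]
    rw [one_div, Real.logb_inv, Real.logb_mul two_ne_zero (by positivity),
      Real.logb_self_eq_one one_lt_two, neg_neg]

lemma fano_condEnt_le (hμ : IsProb μ) {X : Ω → A} (Y : Ω → B) {S : Finset A} (hS : ∀ ω, X ω ∈ S)
    (r : B → A) :
    condEnt μ X Y ≤ 1 + (1 - pr μ (fun ω => r (Y ω) = X ω)) * Real.logb 2 S.card := by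
  obtain ⟨ω₀⟩ := hμ.nonempty
  have hne : S.Nonempty := ⟨_, hS ω₀⟩
  calc condEnt μ X Y
      ≤ -∑ ω, μ ω * Real.logb 2 (fanoWeight S.card (r (Y ω)) (X ω)) :=
        gibbs_condEnt_le hμ Y hS (q := fun a b => fanoWeight S.card (r b) a)
          (fun a b => (fanoWeight_pos hne.card_pos (r b) a).le)
          (fun b => sum_fanoWeight_le_one hne (r b)) fun _ _ => fanoWeight_pos hne.card_pos _ _
    _ = ∑ ω, μ ω * -Real.logb 2 (fanoWeight S.card (r (Y ω)) (X ω)) := by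
        simp only [mul_neg, Finset.sum_neg_distrib]
    _ ≤ ∑ ω, μ ω * (1 + if r (Y ω) = X ω then 0 else Real.logb 2 S.card) :=
        Finset.sum_le_sum fun ω _ => mul_le_mul_of_nonneg_left
          (neg_logb_fanoWeight_le hne.card_pos _ _) (hμ.1 ω)
    _ = ∑ ω, (μ ω + (μ ω - if r (Y ω) = X ω then μ ω else 0) * Real.logb 2 S.card) :=
        Finset.sum_congr rfl fun ω _ => by split_ifs <;> ring
    _ = 1 + (1 - pr μ (fun ω => r (Y ω) = X ω)) * Real.logb 2 S.card := by
        rw [Finset.sum_add_distrib, ← Finset.sum_mul, Finset.sum_sub_distrib, hμ.2, pr]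

lemma condEnt_le_of_decoder [Fintype C] (hμ : IsProb μ) {X : Ω → A} {S : Finset A}
    (hS : ∀ ω, X ω ∈ S) (T : Ω → B) (F : Ω → C) (r : B × C → A) :
    condEnt μ X T ≤ Real.logb 2 (Fintype.card C) +
      (1 + (1 - pr μ (fun ω => r (T ω, F ω) = X ω)) * Real.logb 2 S.card) :=
  (condEnt_le_add_condEnt_pair hμ.1 X T F).trans
    (add_le_add (condEnt_le_logb_card hμ T fun ω => Finset.mem_univ (F ω))
      (fano_condEnt_le hμ _ hS r))

end Entropy

section MutualInformation

variable {Ω A B C D : Type} [Fintype Ω] {μ : Ω → ℝ}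

lemma condEnt_le_add_condMutualInfo (hμ : IsProb μ) (X : Ω → A) (Y : Ω → B) (Z : Ω → C)
    (G : Ω → D) :
    condEnt μ G Z ≤ condEnt μ G X + condEnt μ G Y + condMutualInfo μ X Y Z := by
  have hX : condEnt μ G (fun ω => (X ω, Z ω)) ≤ condEnt μ G X :=
    condEnt_le_condEnt_comp hμ G (fun ω => (X ω, Z ω)) Prod.fst
  have hY : condEnt μ G (fun ω => (Y ω, Z ω)) ≤ condEnt μ G Y :=
    condEnt_le_condEnt_comp hμ G (fun ω => (Y ω, Z ω)) Prod.fst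
  have hGZ : condEnt μ X (fun ω => (G ω, Y ω, Z ω)) ≤ condEnt μ X (fun ω => (G ω, Z ω)) :=
    condEnt_le_condEnt_comp hμ X (fun ω => (G ω, Y ω, Z ω)) (Prod.map id Prod.snd)
  have hforget : ent μ (fun ω => ((X ω, Y ω), Z ω)) ≤ ent μ (fun ω => (X ω, G ω, Y ω, Z ω)) :=
    ent_comp_le hμ.1 (fun ω => (X ω, G ω, Y ω, Z ω)) fun p => ((p.1, p.2.2.1), p.2.2.2)
  have hcomm : ent μ (fun ω => (X ω, G ω, Z ω)) = ent μ (fun ω => (G ω, X ω, Z ω)) :=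
    ent_comp_of_injective μ (fun ω => (G ω, X ω, Z ω)) (f := fun p => (p.2.1, p.1, p.2.2))
      fun p q h => by simp_all [Prod.ext_iff]
  simp only [condMutualInfo, condEnt] at hX hY hGZ ⊢
  linarith

lemma Indep.mutualInfo_eq_zero (hμ : ∀ ω, 0 ≤ μ ω) {X : Ω → A} {Y : Ω → B} (h : Indep μ X Y) :
    mutualInfo μ X Y = 0 := by
  have hlog : ∀ ω, μ ω * Real.logb 2 (valuePr μ (fun ω => (X ω, Y ω)) ω) =
      μ ω * Real.logb 2 (valuePr μ X ω) + μ ω * Real.logb 2 (valuePr μ Y ω) := fun ω => by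
    by_cases h0 : μ ω = 0
    · simp [h0]
    have hval : valuePr μ (fun ω => (X ω, Y ω)) ω = valuePr μ X ω * valuePr μ Y ω := by
      simpa only [valuePr, Prod.mk.injEq] using h (X ω) (Y ω)
    rw [hval, Real.logb_mul (valuePr_pos hμ X h0).ne' (valuePr_pos hμ Y h0).ne', mul_add]
  simp only [mutualInfo, ent_eq_neg_sum, hlog, Finset.sum_add_distrib]
  ring

lemma condMutualInfo_const (hμ : IsProb μ) (X : Ω → A) (Y : Ω → B) (c : C) :
    condMutualInfo μ X Y (fun _ => c) = mutualInfo μ X Y := by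
  simp only [condMutualInfo, mutualInfo, condEnt_const hμ]

lemma condMutualInfo_congr_ae {X X' : Ω → A} {Y Y' : Ω → B} (Z : Ω → C)
    (hX : ∀ ω, μ ω ≠ 0 → X ω = X' ω) (hY : ∀ ω, μ ω ≠ 0 → Y ω = Y' ω) :
    condMutualInfo μ X Y Z = condMutualInfo μ X' Y' Z := by
  have hXY : ∀ ω, μ ω ≠ 0 → (X ω, Y ω) = (X' ω, Y' ω) := fun ω h => by rw [hX ω h, hY ω h]
  simp only [condMutualInfo, condEnt_congr_ae hX fun _ _ => rfl, condEnt_congr_ae hY fun _ _ => rfl,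
    condEnt_congr_ae hXY fun _ _ => rfl]

end MutualInformation

section Extension

variable {Ω Ω' A B C : Type} [Fintype Ω] [Fintype Ω'] {μ : Ω → ℝ} {ν : Ω' → ℝ} {p : Ω' → Ω}

/-- `p` carries the distribution `ν` to `μ`, i.e. it exhibits `(Ω', ν)` as an extension of the
space `(Ω, μ)`, to which random variables on `Ω` are pulled back by composition with `p`. -/
def PrPreserving (ν : Ω' → ℝ) (μ : Ω → ℝ) (p : Ω' → Ω) : Prop :=
  ∀ E : Ω → Prop, pr ν (fun x => E (p x)) = pr μ E

lemma PrPreserving.ent_comp (hp : PrPreserving ν μ p) (X : Ω → A) :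
    ent ν (fun x => X (p x)) = ent μ X := by
  rw [ent_eq_neg_sum]
  refine congrArg Neg.neg ((sum_mul_comp ν (S := Finset.univ.image X) (fun x => by simp) fun a =>
    Real.logb 2 (pr ν (fun x => X (p x) = a))).trans ?_)
  exact Finset.sum_congr rfl fun a _ => by rw [hp (fun ω => X ω = a)]

lemma PrPreserving.condEnt_comp (hp : PrPreserving ν μ p) (X : Ω → A) (Y : Ω → B) :
    condEnt ν (fun x => X (p x)) (fun x => Y (p x)) = condEnt μ X Y := by
  rw [condEnt, condEnt, hp.ent_comp Y, hp.ent_comp fun ω => (X ω, Y ω)]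

lemma PrPreserving.condMutualInfo_comp (hp : PrPreserving ν μ p) (X : Ω → A) (Y : Ω → B)
    (Z : Ω → C) :
    condMutualInfo ν (fun x => X (p x)) (fun x => Y (p x)) (fun x => Z (p x)) =
      condMutualInfo μ X Y Z := by
  rw [condMutualInfo, condMutualInfo, hp.condEnt_comp X Z, hp.condEnt_comp Y Z,
    hp.condEnt_comp (fun ω => (X ω, Y ω)) Z]

lemma CondIndepOrder.comp (hp : PrPreserving ν μ p) {X : Ω → A} {Y : Ω → B} {k : ℕ}
    (h : CondIndepOrder μ X Y k) :
    CondIndepOrder ν (fun x => X (p x)) (fun x => Y (p x)) k := by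
  cases k with
  | zero =>
    intro a b
    rw [hp fun ω => X ω = a ∧ Y ω = b, hp fun ω => X ω = a, hp fun ω => Y ω = b, h a b]
  | succ k =>
    obtain ⟨Ω₁, A', B', _, μ', α₀, β₀, αs, βs, hμ', hdist, hrest⟩ := h
    refine ⟨Ω₁, A', B', _, μ', α₀, β₀, αs, βs, hμ', fun a b => ?_, hrest⟩
    rw [hdist, hp fun ω => X ω = a ∧ Y ω = b]

lemma prPreserving_fst {ν : Ω' × Ω → ℝ} {μ' : Ω' → ℝ} (h : ∀ ω', ∑ ω, ν (ω', ω) = μ' ω') :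
    PrPreserving ν μ' Prod.fst := fun E => by
  simp only [pr, Fintype.sum_prod_type]
  refine Finset.sum_congr rfl fun ω' _ => ?_
  split_ifs
  · exact h ω'
  · exact Finset.sum_const_zero

lemma prPreserving_snd {ν : Ω' × Ω → ℝ} (h : ∀ ω, ∑ ω', ν (ω', ω) = μ ω) :
    PrPreserving ν μ Prod.snd := fun E => by
  simp only [pr, Fintype.sum_prod_type_right]
  refine Finset.sum_congr rfl fun ω _ => ?_
  split_ifs
  · exact h ω
  · exact Finset.sum_const_zero

end Extension

section Coupling

variable {Ω Ω' A B : Type} [Fintype Ω] {μ : Ω → ℝ} {μ' : Ω' → ℝ} {X' : Ω' → A} {X : Ω → A}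

/-- The coupling of `μ'` and `μ` under which `X'` and `X` agree and the two outcomes are
conditionally independent given their common value. The division is by the probability of that
value under `μ`, so the marginals are correct only if `X'` and `X` have the same distribution. -/
noncomputable def fiberCoupling (μ' : Ω' → ℝ) (X' : Ω' → A) (μ : Ω → ℝ) (X : Ω → A)
    (x : Ω' × Ω) : ℝ :=
  if X' x.1 = X x.2 then μ' x.1 * μ x.2 / valuePr μ X x.2 else 0

lemma eq_of_fiberCoupling_ne_zero {x : Ω' × Ω} (h : fiberCoupling μ' X' μ X x ≠ 0) :
    X' x.1 = X x.2 := by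
  by_contra hne
  exact h (if_neg hne)

variable [Fintype Ω']

lemma sum_fiberCoupling_left (hμ : ∀ ω, 0 ≤ μ ω)
    (hdist : ∀ a, pr μ' (fun ω' => X' ω' = a) = pr μ (fun ω => X ω = a)) (ω : Ω) :
    ∑ ω', fiberCoupling μ' X' μ X (ω', ω) = μ ω :=
  calc ∑ ω', fiberCoupling μ' X' μ X (ω', ω)
      = ∑ ω', μ ω / valuePr μ X ω * (if X' ω' = X ω then μ' ω' else 0) :=
        Finset.sum_congr rfl fun ω' _ => by
          simp only [fiberCoupling]
          split_ifs <;> ring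
    _ = μ ω / valuePr μ X ω * pr μ' (fun ω' => X' ω' = X ω) := by rw [← Finset.mul_sum, pr]
    _ = μ ω := by rw [hdist, ← valuePr, div_valuePr_mul_valuePr hμ]

lemma sum_fiberCoupling_right (hμ' : ∀ ω', 0 ≤ μ' ω')
    (hdist : ∀ a, pr μ' (fun ω' => X' ω' = a) = pr μ (fun ω => X ω = a)) (ω' : Ω') :
    ∑ ω, fiberCoupling μ' X' μ X (ω', ω) = μ' ω' :=
  calc ∑ ω, fiberCoupling μ' X' μ X (ω', ω)
      = ∑ ω, μ' ω' / valuePr μ' X' ω' * (if X ω = X' ω' then μ ω else 0) :=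
        Finset.sum_congr rfl fun ω _ => by
          by_cases h : X' ω' = X ω
          · rw [fiberCoupling, if_pos h, if_pos h.symm, valuePr, valuePr, hdist, h]
            ring
          · rw [fiberCoupling, if_neg h, if_neg (Ne.symm h), mul_zero]
    _ = μ' ω' / valuePr μ' X' ω' * pr μ (fun ω => X ω = X' ω') := by rw [← Finset.mul_sum, pr]
    _ = μ' ω' := by rw [← hdist, ← valuePr, div_valuePr_mul_valuePr hμ']

lemma isProb_fiberCoupling (hμ' : IsProb μ') (hμ : ∀ ω, 0 ≤ μ ω)
    (hdist : ∀ a, pr μ' (fun ω' => X' ω' = a) = pr μ (fun ω => X ω = a)) :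
    IsProb (fiberCoupling μ' X' μ X) := by
  refine ⟨fun x => ite_nonneg ?_ le_rfl, ?_⟩
  · exact div_nonneg (mul_nonneg (hμ'.1 _) (hμ _)) (pr_nonneg hμ _)
  · simp only [Fintype.sum_prod_type, sum_fiberCoupling_right hμ'.1 hdist, hμ'.2]

lemma CondIndepOrder.exists_extension (hμ : ∀ ω, 0 ≤ μ ω) {Y : Ω → B} {k : ℕ}
    (h : CondIndepOrder μ X Y (k + 1)) :
    ∃ (Ω₁ A₁ B₁ : Type) (_ : Fintype Ω₁) (ν : Ω₁ → ℝ) (p : Ω₁ → Ω) (αs : Ω₁ → A₁) (βs : Ω₁ → B₁),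
      IsProb ν ∧ PrPreserving ν μ p ∧
      condMutualInfo ν (fun x => X (p x)) (fun x => Y (p x)) αs = 0 ∧
      condMutualInfo ν (fun x => X (p x)) (fun x => Y (p x)) βs = 0 ∧
      CondIndepOrder ν αs βs k := by
  obtain ⟨Ω', A', B', _, μ', α₀, β₀, αs, βs, hμ', hdist, hαs, hβs, horder⟩ := h
  have hdist' : ∀ d : A × B,
      pr μ' (fun ω' => (α₀ ω', β₀ ω') = d) = pr μ (fun ω => (X ω, Y ω) = d) := fun d => by
    simpa only [Prod.ext_iff] using hdist d.1 d.2
  let ν := fiberCoupling μ' (fun ω' => (α₀ ω', β₀ ω')) μ (fun ω => (X ω, Y ω))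
  have hfst : PrPreserving ν μ' Prod.fst := prPreserving_fst (sum_fiberCoupling_right hμ'.1 hdist')
  have hsnd : PrPreserving ν μ Prod.snd := prPreserving_snd (sum_fiberCoupling_left hμ hdist')
  have hX : ∀ x, ν x ≠ 0 → X x.2 = α₀ x.1 := fun x hx =>
    (congrArg Prod.fst (eq_of_fiberCoupling_ne_zero hx)).symm
  have hY : ∀ x, ν x ≠ 0 → Y x.2 = β₀ x.1 := fun x hx =>
    (congrArg Prod.snd (eq_of_fiberCoupling_ne_zero hx)).symm
  refine ⟨Ω' × Ω, A', B', inferInstance, ν, Prod.snd, fun x => αs x.1, fun x => βs x.1,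
    isProb_fiberCoupling hμ' hμ hdist', hsnd, ?_, ?_, CondIndepOrder.comp hfst horder⟩
  · rw [condMutualInfo_congr_ae _ hX hY, hfst.condMutualInfo_comp α₀ β₀ αs, hαs]
  · rw [condMutualInfo_congr_ae _ hX hY, hfst.condMutualInfo_comp α₀ β₀ βs, hβs]

end Coupling

section Order

variable {Ω A B C : Type} [Fintype Ω] {μ : Ω → ℝ} {X : Ω → A} {Y : Ω → B} {k : ℕ}

lemma CondIndepOrder.ent_le (hμ : IsProb μ) (h : CondIndepOrder μ X Y k) (G : Ω → C) :
    ent μ G ≤ 2 ^ k * (condEnt μ G X + condEnt μ G Y) := by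
  induction k generalizing Ω A B with
  | zero =>
    have hle := condEnt_le_add_condMutualInfo hμ X Y (fun _ => ()) G
    have hindep : mutualInfo μ X Y = 0 := Indep.mutualInfo_eq_zero hμ.1 h
    rw [condMutualInfo_const hμ, hindep, condEnt_const hμ] at hle
    simpa using hle
  | succ k ih =>
    obtain ⟨Ω₁, A₁, B₁, _, ν, p, αs, βs, hν, hp, hαs, hβs, horder⟩ := h.exists_extension hμ.1
    have hle : ∀ {D : Type} (Z : Ω₁ → D),
        condMutualInfo ν (fun x => X (p x)) (fun x => Y (p x)) Z = 0 →
        condEnt ν (fun x => G (p x)) Z ≤ condEnt μ G X + condEnt μ G Y := fun Z hZ => by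
      simpa only [hZ, add_zero, hp.condEnt_comp G X, hp.condEnt_comp G Y] using
        condEnt_le_add_condMutualInfo hν (fun x => X (p x)) (fun x => Y (p x)) Z fun x => G (p x)
    calc ent μ G = ent ν (fun x => G (p x)) := (hp.ent_comp G).symm
      _ ≤ 2 ^ k * (condEnt ν (fun x => G (p x)) αs + condEnt ν (fun x => G (p x)) βs) :=
        ih hν horder _
      _ ≤ 2 ^ k * ((condEnt μ G X + condEnt μ G Y) + (condEnt μ G X + condEnt μ G Y)) := by
        gcongr
        · exact hle αs hαs
        · exact hle βs hβs
      _ = 2 ^ (k + 1) * (condEnt μ G X + condEnt μ G Y) := by ring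

lemma CondIndepOrder.ent_add_ent_le (hμ : IsProb μ) (h : CondIndepOrder μ X Y k) (G : Ω → C) :
    ent μ X + ent μ Y ≤ condEnt μ X G + condEnt μ Y G + (2 - (2 : ℝ) ^ (-(k : ℤ))) * ent μ G := by
  have hG : (2 : ℝ) ^ (-(k : ℤ)) * ent μ G ≤ condEnt μ G X + condEnt μ G Y := by
    rw [zpow_neg, zpow_natCast, inv_mul_le_iff₀ (by positivity)]
    exact h.ent_le hμ G
  have hX := ent_add_condEnt_comm μ X G
  have hY := ent_add_condEnt_comm μ Y G
  linarith

end Order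

section IID

variable {Ω A B C : Type} [Fintype Ω] {μ : Ω → ℝ}

lemma IsProb.iid (hμ : IsProb μ) (n : ℕ) : IsProb (iidMeasure μ n) := by
  refine ⟨fun ω => Finset.prod_nonneg fun i _ => hμ.1 (ω i), ?_⟩
  simp only [iidMeasure, ← Fintype.prod_sum (fun (_ : Fin n) ω => μ ω), hμ.2, Finset.prod_const_one]

lemma pr_iidMeasure_forall (μ : Ω → ℝ) {n : ℕ} (E : Fin n → Ω → Prop) :
    pr (iidMeasure μ n) (fun ωv => ∀ i, E i (ωv i)) = ∏ i, pr μ (E i) := by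
  simp only [pr, iidMeasure, Fintype.prod_sum fun i ω => if E i ω then μ ω else 0]
  exact Finset.sum_congr rfl fun ωv _ => by simp [Finset.prod_ite_zero]

lemma pr_iidRV_eq (μ : Ω → ℝ) (X : Ω → A) {n : ℕ} (a : Fin n → A) :
    pr (iidMeasure μ n) (fun ωv => iidRV X n ωv = a) = ∏ i, pr μ (fun ω => X ω = a i) := by
  simp only [iidRV, funext_iff, ← pr_iidMeasure_forall]

lemma pr_iidRV_eq_and (μ : Ω → ℝ) (X : Ω → A) (Y : Ω → B) {n : ℕ} (a : Fin n → A) (b : Fin n → B) :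
    pr (iidMeasure μ n) (fun ωv => iidRV X n ωv = a ∧ iidRV Y n ωv = b) =
      ∏ i, pr μ (fun ω => X ω = a i ∧ Y ω = b i) := by
  simp only [iidRV, funext_iff, ← forall_and, ← pr_iidMeasure_forall]

lemma sum_iidMeasure_mul_coord (hμ : ∑ ω, μ ω = 1) {n : ℕ} (i : Fin n) (L : Ω → ℝ) :
    ∑ ωv, iidMeasure μ n ωv * L (ωv i) = ∑ ω, μ ω * L ω := by
  have hfactor : ∀ ωv : Fin n → Ω, iidMeasure μ n ωv * L (ωv i) =
      ∏ j, (μ (ωv j) * if j = i then L (ωv j) else 1) := fun ωv => by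
    rw [Finset.prod_mul_distrib, Fintype.prod_ite_eq' i fun j => L (ωv j), iidMeasure]
  simp only [hfactor]
  rw [← Fintype.prod_sum (fun j ω => μ ω * if j = i then L ω else 1),
    Fintype.prod_eq_single i fun j hj => by simp [hj, hμ]]
  simp

lemma ent_iid (hμ : IsProb μ) (X : Ω → A) (n : ℕ) :
    ent (iidMeasure μ n) (iidRV X n) = n * ent μ X := by
  have hlog : ∀ ωv, iidMeasure μ n ωv * Real.logb 2 (valuePr (iidMeasure μ n) (iidRV X n) ωv) =
      ∑ i, iidMeasure μ n ωv * Real.logb 2 (valuePr μ X (ωv i)) := fun ωv => by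
    by_cases h0 : iidMeasure μ n ωv = 0
    · simp [h0]
    have hval : valuePr (iidMeasure μ n) (iidRV X n) ωv = ∏ i, valuePr μ X (ωv i) :=
      pr_iidRV_eq μ X (iidRV X n ωv)
    have hne : ∀ i ∈ Finset.univ, valuePr μ X (ωv i) ≠ 0 := fun i hi =>
      (valuePr_pos hμ.1 X (Finset.prod_ne_zero_iff.1 h0 i hi)).ne'
    rw [hval, Real.logb_prod _ _ hne, Finset.mul_sum]
  simp only [ent_eq_neg_sum, hlog]
  rw [Finset.sum_comm]
  simp only [sum_iidMeasure_mul_coord hμ.2 _ fun ω => Real.logb 2 (valuePr μ X ω),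
    Finset.sum_const, Finset.card_univ, Fintype.card_fin, nsmul_eq_mul, mul_neg]

lemma condEnt_iid (hμ : IsProb μ) (X : Ω → A) (Y : Ω → B) (n : ℕ) :
    condEnt (iidMeasure μ n) (iidRV X n) (iidRV Y n) = n * condEnt μ X Y := by
  have hpair : ent (iidMeasure μ n) (fun ωv => (iidRV X n ωv, iidRV Y n ωv)) =
      ent (iidMeasure μ n) (iidRV (fun ω => (X ω, Y ω)) n) :=
    ent_comp_of_injective _ (iidRV (fun ω => (X ω, Y ω)) n)
      (Equiv.arrowProdEquivProdArrow _ _ _).injective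
  rw [condEnt, condEnt, hpair, ent_iid hμ, ent_iid hμ, mul_sub]

lemma condMutualInfo_iid (hμ : IsProb μ) (X : Ω → A) (Y : Ω → B) (Z : Ω → C) (n : ℕ) :
    condMutualInfo (iidMeasure μ n) (iidRV X n) (iidRV Y n) (iidRV Z n) =
      n * condMutualInfo μ X Y Z := by
  let split := Equiv.arrowProdEquivProdArrow (Fin n) (fun _ => A) (fun _ => B)
  have hpair : condEnt (iidMeasure μ n) (fun ωv => (iidRV X n ωv, iidRV Y n ωv)) (iidRV Z n) =
      n * condEnt μ (fun ω => (X ω, Y ω)) Z := by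
    change condEnt _ (fun ωv => split (iidRV (fun ω => (X ω, Y ω)) n ωv)) _ = _
    rw [condEnt_comp_left_of_injective _ _ _ split.injective, condEnt_iid hμ]
  rw [condMutualInfo, condMutualInfo, hpair, condEnt_iid hμ, condEnt_iid hμ]
  ring

lemma CondIndepOrder.iid {X : Ω → A} {Y : Ω → B} {k : ℕ} (h : CondIndepOrder μ X Y k) (n : ℕ) :
    CondIndepOrder (iidMeasure μ n) (iidRV X n) (iidRV Y n) k := by
  induction k generalizing Ω A B with
  | zero =>
    intro a b
    rw [pr_iidRV_eq_and, pr_iidRV_eq, pr_iidRV_eq, ← Finset.prod_mul_distrib]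
    exact Finset.prod_congr rfl fun i _ => h (a i) (b i)
  | succ k ih =>
    obtain ⟨Ω', A', B', _, μ', α₀, β₀, αs, βs, hμ', hdist, hαs, hβs, horder⟩ := h
    refine ⟨Fin n → Ω', Fin n → A', Fin n → B', inferInstance, iidMeasure μ' n, iidRV α₀ n,
      iidRV β₀ n, iidRV αs n, iidRV βs n, hμ'.iid n, fun a b => ?_, ?_, ?_, ih horder⟩
    · rw [pr_iidRV_eq_and, pr_iidRV_eq_and]
      exact Finset.prod_congr rfl fun i _ => hdist (a i) (b i)
    · rw [condMutualInfo_iid hμ', hαs, mul_zero]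
    · rw [condMutualInfo_iid hμ', hβs, mul_zero]

end IID

section BlockCode

variable {Ω A B : Type} [Fintype Ω] {μ : Ω → ℝ}

lemma logb_two_natCast_nonneg (m : ℕ) : 0 ≤ Real.logb 2 m :=
  div_nonneg (Real.log_natCast_nonneg m) (Real.log_nonneg one_le_two)

lemma two_sub_two_zpow_neg_nonneg (k : ℕ) : (0 : ℝ) ≤ 2 - (2 : ℝ) ^ (-(k : ℤ)) := by
  have hle : ((2 : ℝ) ^ k)⁻¹ ≤ 1 := inv_le_one_of_one_le₀ (one_le_pow₀ one_le_two)
  rw [zpow_neg, zpow_natCast]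
  linarith

lemma logb_two_card_bits (m : ℕ) : Real.logb 2 (Fintype.card (Fin m → Bool)) = m := by
  simp [Real.logb_pow]

lemma condEnt_iidRV_le_of_decoder (hμ : IsProb μ) (X : Ω → A) {n l m : ℕ} {ε : ℝ}
    (T : (Fin n → Ω) → Fin l → Bool) (F : (Fin n → Ω) → Fin m → Bool)
    (r : (Fin l → Bool) × (Fin m → Bool) → Fin n → A)
    (hr : pr (iidMeasure μ n) (fun ωv => r (T ωv, F ωv) = iidRV X n ωv) > 1 - ε) :
    condEnt (iidMeasure μ n) (iidRV X n) T ≤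
      m + (1 + ε * (n * Real.logb 2 (Finset.univ.image X).card)) := by
  let S : Finset (Fin n → A) := Fintype.piFinset fun _ => Finset.univ.image X
  have hS : ∀ ωv, iidRV X n ωv ∈ S := fun ωv => Fintype.mem_piFinset.2 fun i =>
    Finset.mem_image_of_mem X (Finset.mem_univ (ωv i))
  have hcard : Real.logb 2 S.card = n * Real.logb 2 (Finset.univ.image X).card := by
    rw [Fintype.card_piFinset_const, Nat.cast_pow, Real.logb_pow]
  have hnonneg : 0 ≤ Real.logb 2 (S.card : ℝ) := logb_two_natCast_nonneg S.card
  have hdecode := condEnt_le_of_decoder (hμ.iid n) hS T F r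
  rw [logb_two_card_bits] at hdecode
  rw [← hcard]
  refine hdecode.trans ?_
  gcongr
  linarith

lemma CondIndepOrder.mul_ent_add_ent_le_of_blockCode (hμ : IsProb μ) {α : Ω → A} {β : Ω → B}
    {k : ℕ} (h : CondIndepOrder μ α β k) {n lt lf lg : ℕ} {ε : ℝ}
    {T : (Fin n → Ω) → Fin lt → Bool} {F : (Fin n → Ω) → Fin lf → Bool}
    {G : (Fin n → Ω) → Fin lg → Bool} {r : (Fin lt → Bool) × (Fin lf → Bool) → Fin n → A}
    {s : (Fin lt → Bool) × (Fin lg → Bool) → Fin n → B}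
    (hr : pr (iidMeasure μ n) (fun ωv => r (T ωv, F ωv) = iidRV α n ωv) > 1 - ε)
    (hs : pr (iidMeasure μ n) (fun ωv => s (T ωv, G ωv) = iidRV β n ωv) > 1 - ε) :
    n * (ent μ α + ent μ β) ≤ lf + lg + (2 - (2 : ℝ) ^ (-(k : ℤ))) * lt + 2 +
      n * ε * (Real.logb 2 (Finset.univ.image α).card +
        Real.logb 2 (Finset.univ.image β).card) := by
  have hT : ent (iidMeasure μ n) T ≤ lt :=
    (ent_le_logb_card (hμ.iid n) fun ωv => Finset.mem_univ (T ωv)).trans_eq (logb_two_card_bits lt)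
  have hone := (h.iid n).ent_add_ent_le (hμ.iid n) T
  rw [ent_iid hμ, ent_iid hμ] at hone
  have hα := condEnt_iidRV_le_of_decoder hμ α T F r hr
  have hβ := condEnt_iidRV_le_of_decoder hμ β T G s hs
  have hcommon := mul_le_mul_of_nonneg_left hT (two_sub_two_zpow_neg_nonneg k)
  linarith

lemma InRateRegion.ent_add_ent_le_add (hμ : IsProb μ) {α : Ω → A} {β : Ω → B} {k : ℕ}
    (h : CondIndepOrder μ α β k) {u v w : ℝ} (hr : InRateRegion μ α β u v w) {δ : ℝ} (hδ : 0 < δ) :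
    ent μ α + ent μ β ≤ v + w + (2 - (2 : ℝ) ^ (-(k : ℤ))) * u +
      (6 + (Real.logb 2 (Finset.univ.image α).card +
        Real.logb 2 (Finset.univ.image β).card)) * δ := by
  obtain ⟨hu, hv, hw, hcode⟩ := hr
  obtain ⟨n₀, hn₀⟩ := hcode δ hδ δ hδ
  obtain ⟨n₁, hn₁⟩ := exists_nat_gt δ⁻¹
  let n := max n₀ n₁
  obtain ⟨t, f, g, r, s, hα, hβ⟩ := hn₀ n (le_max_left _ _)
  have hn : δ⁻¹ < n := hn₁.trans_le (Nat.cast_le.2 (le_max_right _ _))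
  have hnpos : (0 : ℝ) < n := (inv_pos.2 hδ).trans hn
  have hnδ : 1 < δ * n := (inv_lt_iff_one_lt_mul₀' hδ).1 hn
  have hfloor : ∀ {x : ℝ}, 0 ≤ x → (⌊(x + δ) * n⌋₊ : ℝ) ≤ (x + δ) * n := fun hx =>
    Nat.floor_le (by positivity)
  have hcommon := mul_le_mul_of_nonneg_left (hfloor hu) (two_sub_two_zpow_neg_nonneg k)
  have hcoef : (2 - (2 : ℝ) ^ (-(k : ℤ))) * (δ * n) ≤ 2 * (δ * n) :=
    mul_le_mul_of_nonneg_right (sub_le_self _ (by positivity)) (by positivity)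
  have hblock := h.mul_ent_add_ent_le_of_blockCode hμ hα hβ
  refine le_of_mul_le_mul_left (hblock.trans ?_) hnpos
  linarith [hfloor hv, hfloor hw]

end BlockCode

/-- If `α` and `β` are conditionally independent of order `k` and
`(u, v, w)` lies in the rate region of `(α, β)`, then
`H(α) + H(β) ≤ v + w + (2 − 2^{−k})·u`. -/
theorem rateRegion_bound_of_condIndepOrder {Ω A B : Type} [Fintype Ω]
    (μ : Ω → ℝ) (hμ : IsProb μ) (α : Ω → A) (β : Ω → B) (k : ℕ)
    (h : CondIndepOrder μ α β k) (u v w : ℝ) (hr : InRateRegion μ α β u v w) :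
    ent μ α + ent μ β ≤ v + w + (2 - (2:ℝ) ^ (-(k : ℤ))) * u := by
  let L := Real.logb 2 (Finset.univ.image α).card + Real.logb 2 (Finset.univ.image β).card
  have hL : 0 ≤ L := add_nonneg (logb_two_natCast_nonneg _) (logb_two_natCast_nonneg _)
  refine le_of_forall_pos_le_add fun η hη => ?_
  have hδ : 0 < η / (6 + L) := by positivity
  simpa only [L, mul_div_cancel₀ η (by positivity : 6 + L ≠ 0)] using
    hr.ent_add_ent_le_add hμ h hδ
end

section
/- Let α and β be random variables on a finite probability space that are conditionally independent of order k, and let (α₁,β₁), …, (α_n,β_n) be i.i.d. pairs of random variables, each pair having the same joint distribution as (α, β). Then the random variables αⁿ = (α₁,…,α_n) and βⁿ = (β₁,…,β_n) are conditionally independent of order k. -/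
open scoped BigOperators Classical

/-!
Conditional independence of order `k` depends on a pair only through its joint distribution, so
independent pairs `(αᵢ, βᵢ)` may be realised as the coordinates of a product space. There one
inducts on the order: events that constrain each coordinate separately have product probabilities,
which preserves independence, and entropy is additive over the coordinates, so the product of the
witnesses for order `k + 1` again has vanishing conditional mutual informations.
-/

section JointLaw

variable {Ω Ω' A B : Type} [Fintype Ω] [Fintype Ω'] {μ : Ω → ℝ} {μ' : Ω' → ℝ}
  {α : Ω → A} {β : Ω → B} {α' : Ω' → A} {β' : Ω' → B}

/-- The pairs `(α, β)` and `(α', β')`, possibly living on different spaces, have the same joint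
distribution. -/
def SameJointLaw (μ : Ω → ℝ) (α : Ω → A) (β : Ω → B) (μ' : Ω' → ℝ) (α' : Ω' → A)
    (β' : Ω' → B) : Prop :=
  ∀ a b, pr μ (fun ω => α ω = a ∧ β ω = b) = pr μ' (fun ω => α' ω = a ∧ β' ω = b)

theorem sum_pr_and_eq (μ : Ω → ℝ) (E : Ω → Prop) {S : Finset B} (hS : ∀ ω, β ω ∈ S) :
    ∑ b ∈ S, pr μ (fun ω => E ω ∧ β ω = b) = pr μ E := by
  simp only [pr]
  rw [Finset.sum_comm]
  refine Finset.sum_congr rfl fun ω _ => ?_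
  by_cases hE : E ω <;> simp [hE, hS]

theorem SameJointLaw.swap (h : SameJointLaw μ α β μ' α' β') : SameJointLaw μ β α μ' β' α' :=
  fun b a => by simpa only [and_comm] using h a b

theorem SameJointLaw.pr_left_eq (h : SameJointLaw μ α β μ' α' β') (a : A) :
    pr μ (fun ω => α ω = a) = pr μ' (fun ω => α' ω = a) := by
  let S : Finset B := Finset.univ.image β ∪ Finset.univ.image β'
  have hβ : ∀ ω, β ω ∈ S := fun ω =>
    Finset.mem_union_left _ (Finset.mem_image_of_mem β (Finset.mem_univ ω))
  have hβ' : ∀ ω, β' ω ∈ S := fun ω =>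
    Finset.mem_union_right _ (Finset.mem_image_of_mem β' (Finset.mem_univ ω))
  rw [← sum_pr_and_eq μ _ hβ, ← sum_pr_and_eq μ' _ hβ']
  exact Finset.sum_congr rfl fun b _ => h a b

theorem Indep.of_sameJointLaw (hind : Indep μ α β) (h : SameJointLaw μ α β μ' α' β') :
    Indep μ' α' β' := fun a b => by
  rw [← h a b, ← h.pr_left_eq, ← h.swap.pr_left_eq]
  exact hind a b

theorem CondIndepOrder.of_sameJointLaw {k : ℕ} (hind : CondIndepOrder μ α β k)
    (h : SameJointLaw μ α β μ' α' β') : CondIndepOrder μ' α' β' k := by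
  cases k with
  | zero => exact Indep.of_sameJointLaw hind h
  | succ k =>
    obtain ⟨Ω₁, A₁, B₁, iΩ₁, μ₁, α₀, β₀, αs, βs, hμ₁, hlaw, hrest⟩ := hind
    exact ⟨Ω₁, A₁, B₁, iΩ₁, μ₁, α₀, β₀, αs, βs, hμ₁, fun a b => (hlaw a b).trans (h a b), hrest⟩

end JointLaw

section Entropy

variable {Ω A A' C : Type} [Fintype Ω] {μ : Ω → ℝ}

theorem pr_pos (hμ : ∀ ω, 0 ≤ μ ω) {E : Ω → Prop} {ω : Ω} (hE : E ω) (hω : μ ω ≠ 0) :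
    0 < pr μ E := by
  refine Finset.sum_pos' (fun x _ => ite_nonneg (hμ x) le_rfl) ⟨ω, Finset.mem_univ ω, ?_⟩
  rw [if_pos hE]
  exact (hμ ω).lt_of_ne' hω

theorem ent_eq_neg_sum_mul_logb (μ : Ω → ℝ) (α : Ω → A) :
    ent μ α = -∑ ω, μ ω * Real.logb 2 (pr μ fun ω' => α ω' = α ω) := by
  rw [ent, ← Finset.sum_fiberwise_of_maps_to
    (fun ω _ => Finset.mem_image_of_mem α (Finset.mem_univ ω))]
  congr 1
  refine Finset.sum_congr rfl fun a _ => ?_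
  calc pr μ (fun ω => α ω = a) * Real.logb 2 (pr μ fun ω => α ω = a)
      = ∑ ω with α ω = a, μ ω * Real.logb 2 (pr μ fun ω' => α ω' = a) := by
        rw [← Finset.sum_mul, Finset.sum_filter, ← pr]
    _ = ∑ ω with α ω = a, μ ω * Real.logb 2 (pr μ fun ω' => α ω' = α ω) :=
        Finset.sum_congr rfl fun ω hω => by rw [(Finset.mem_filter.1 hω).2]

theorem ent_congr {α : Ω → A} {α' : Ω → A'} (h : ∀ ω ω', α ω = α ω' ↔ α' ω = α' ω') :
    ent μ α = ent μ α' := by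
  simp only [ent_eq_neg_sum_mul_logb, h]

theorem condEnt_congr_left {α : Ω → A} {α' : Ω → A'} (h : ∀ ω ω', α ω = α ω' ↔ α' ω = α' ω')
    (γ : Ω → C) : condEnt μ α γ = condEnt μ α' γ := by
  rw [condEnt, condEnt, ent_congr fun ω ω' => ?_]
  rw [Prod.mk.injEq, Prod.mk.injEq, h]

end Entropy

section Product

variable {ι : Type} [Fintype ι] {Ω A B C : ι → Type} [∀ i, Fintype (Ω i)]

/-- The product distribution on `∀ i, Ω i`, under which the coordinates are independent and the
`i`-th one has distribution `μ i`. The coordinatewise copies of random variables `α i` are then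
`Pi.map α`. -/
def piDist (μ : ∀ i, Ω i → ℝ) : (∀ i, Ω i) → ℝ :=
  fun ω => ∏ i, μ i (ω i)

theorem sum_piDist (μ : ∀ i, Ω i → ℝ) : ∑ ω, piDist μ ω = ∏ i, ∑ ω, μ i ω :=
  (Fintype.prod_sum μ).symm

theorem IsProb.piDist {μ : ∀ i, Ω i → ℝ} (hμ : ∀ i, IsProb (μ i)) : IsProb (piDist μ) := by
  refine ⟨fun ω => Finset.prod_nonneg fun i _ => (hμ i).1 (ω i), ?_⟩
  rw [sum_piDist]
  exact Finset.prod_eq_one fun i _ => (hμ i).2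

theorem sum_piDist_mul_eval {μ : ∀ i, Ω i → ℝ} {j : ι} (hμ : ∀ i ≠ j, ∑ ω, μ i ω = 1)
    (f : Ω j → ℝ) : ∑ ω, piDist μ ω * f (ω j) = ∑ ω, μ j ω * f ω := by
  -- `piDist μ ω * f (ω j)` is again a product weight: absorb `f` into the `j`-th factor.
  let ν : ∀ i, Ω i → ℝ := Function.update μ j fun ω => μ j ω * f ω
  have hνj : ν j = fun ω => μ j ω * f ω := Function.update_self ..
  have hν : ∀ i ≠ j, ν i = μ i := fun i hij => Function.update_of_ne hij ..
  have hweight : ∀ ω, piDist μ ω * f (ω j) = piDist ν ω := fun ω => by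
    rw [piDist, piDist, Fintype.prod_eq_mul_prod_compl j, Fintype.prod_eq_mul_prod_compl j, hνj,
      mul_right_comm]
    congr 1
    exact Finset.prod_congr rfl fun i hi => by rw [hν i (by simpa using hi)]
  simp only [hweight]
  rw [sum_piDist, Fintype.prod_eq_single j fun i hij => by rw [hν i hij, hμ i hij], hνj]

theorem pr_piDist (μ : ∀ i, Ω i → ℝ) (E : ∀ i, Ω i → Prop) :
    pr (piDist μ) (fun ω => ∀ i, E i (ω i)) = ∏ i, pr (μ i) (E i) := by
  simp only [pr, Fintype.prod_sum, piDist, Fintype.prod_ite_zero]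
  -- Only the decidability instances of the two conditionals differ.
  congr!

theorem pr_piDist_map_eq (μ : ∀ i, Ω i → ℝ) (α : ∀ i, Ω i → A i) (a : ∀ i, A i) :
    pr (piDist μ) (fun ω => Pi.map α ω = a) = ∏ i, pr (μ i) (fun ω => α i ω = a i) := by
  simp only [← pr_piDist, funext_iff, Pi.map_apply]

theorem pr_piDist_map_eq_and_map_eq (μ : ∀ i, Ω i → ℝ) (α : ∀ i, Ω i → A i)
    (β : ∀ i, Ω i → B i) (a : ∀ i, A i) (b : ∀ i, B i) :
    pr (piDist μ) (fun ω => Pi.map α ω = a ∧ Pi.map β ω = b) =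
      ∏ i, pr (μ i) (fun ω => α i ω = a i ∧ β i ω = b i) := by
  simp only [← pr_piDist, funext_iff, Pi.map_apply, forall_and]

theorem Indep.piMap {μ : ∀ i, Ω i → ℝ} {α : ∀ i, Ω i → A i} {β : ∀ i, Ω i → B i}
    (h : ∀ i, Indep (μ i) (α i) (β i)) : Indep (piDist μ) (Pi.map α) (Pi.map β) := fun a b => by
  rw [pr_piDist_map_eq_and_map_eq, pr_piDist_map_eq, pr_piDist_map_eq, ← Finset.prod_mul_distrib]
  exact Finset.prod_congr rfl fun i _ => h i (a i) (b i)

theorem ent_piDist_map {μ : ∀ i, Ω i → ℝ} (hμ : ∀ i, IsProb (μ i)) (α : ∀ i, Ω i → A i) :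
    ent (piDist μ) (Pi.map α) = ∑ i, ent (μ i) (α i) := by
  let logProb (i : ι) (ω : Ω i) : ℝ := Real.logb 2 (pr (μ i) fun ω' => α i ω' = α i ω)
  have logProb_add (ω : ∀ i, Ω i) :
      piDist μ ω * Real.logb 2 (pr (piDist μ) fun ω' => Pi.map α ω' = Pi.map α ω) =
        ∑ i, piDist μ ω * logProb i (ω i) := by
    rw [← Finset.mul_sum, pr_piDist_map_eq]
    -- Off the support a factor may vanish, and `logb 2 0 = 0` would break additivity.
    rcases eq_or_ne (piDist μ ω) 0 with hω | hω
    · rw [hω, zero_mul, zero_mul]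
    · have hfactor (i : ι) : μ i (ω i) ≠ 0 := Finset.prod_ne_zero_iff.1 hω i (Finset.mem_univ i)
      have hpr (i : ι) : pr (μ i) (fun ω' => α i ω' = α i (ω i)) ≠ 0 :=
        ne_of_gt (pr_pos (hμ i).1 rfl (hfactor i))
      simp only [Pi.map_apply, Real.logb_prod _ _ fun i _ => hpr i, logProb]
  calc ent (piDist μ) (Pi.map α)
      = -∑ ω, ∑ i, piDist μ ω * logProb i (ω i) := by
        simp only [ent_eq_neg_sum_mul_logb, logProb_add]
    _ = -∑ i, ∑ ω, μ i ω * logProb i ω := by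
        rw [Finset.sum_comm]
        simp only [sum_piDist_mul_eval fun i _ => (hμ i).2]
    _ = ∑ i, ent (μ i) (α i) := by
        simp only [ent_eq_neg_sum_mul_logb, Finset.sum_neg_distrib, logProb]

theorem condEnt_piDist_map {μ : ∀ i, Ω i → ℝ} (hμ : ∀ i, IsProb (μ i))
    (α : ∀ i, Ω i → A i) (γ : ∀ i, Ω i → C i) :
    condEnt (piDist μ) (Pi.map α) (Pi.map γ) = ∑ i, condEnt (μ i) (α i) (γ i) := by
  have hpair : ent (piDist μ) (fun ω => (Pi.map α ω, Pi.map γ ω)) =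
      ∑ i, ent (μ i) (fun ω => (α i ω, γ i ω)) := by
    rw [← ent_piDist_map hμ]
    exact ent_congr fun ω ω' => by simp [funext_iff, forall_and]
  simp only [condEnt, hpair, ent_piDist_map hμ, Finset.sum_sub_distrib]

theorem condMutualInfo_piDist_map {μ : ∀ i, Ω i → ℝ} (hμ : ∀ i, IsProb (μ i))
    (α : ∀ i, Ω i → A i) (β : ∀ i, Ω i → B i) (γ : ∀ i, Ω i → C i) :
    condMutualInfo (piDist μ) (Pi.map α) (Pi.map β) (Pi.map γ) =
      ∑ i, condMutualInfo (μ i) (α i) (β i) (γ i) := by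
  have hpair : condEnt (piDist μ) (fun ω => (Pi.map α ω, Pi.map β ω)) (Pi.map γ) =
      ∑ i, condEnt (μ i) (fun ω => (α i ω, β i ω)) (γ i) := by
    rw [← condEnt_piDist_map hμ]
    exact condEnt_congr_left (fun ω ω' => by simp [funext_iff, forall_and]) _
  simp only [condMutualInfo, hpair, condEnt_piDist_map hμ, Finset.sum_sub_distrib,
    Finset.sum_add_distrib]

theorem CondIndepOrder.piMap {k : ℕ} {μ : ∀ i, Ω i → ℝ} {α : ∀ i, Ω i → A i}
    {β : ∀ i, Ω i → B i} (h : ∀ i, CondIndepOrder (μ i) (α i) (β i) k) :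
    CondIndepOrder (piDist μ) (Pi.map α) (Pi.map β) k := by
  induction k generalizing Ω A B with
  | zero => exact Indep.piMap h
  | succ k ih =>
    choose Ω₁ A₁ B₁ iΩ₁ μ₁ α₀ β₀ αs βs hμ₁ hlaw hαs hβs hind using h
    refine ⟨∀ i, Ω₁ i, ∀ i, A₁ i, ∀ i, B₁ i, inferInstance, piDist μ₁, Pi.map α₀, Pi.map β₀,
      Pi.map αs, Pi.map βs, IsProb.piDist hμ₁, fun a b => ?_, ?_, ?_, ih hind⟩
    · simp only [pr_piDist_map_eq_and_map_eq, hlaw]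
    · simp only [condMutualInfo_piDist_map hμ₁, hαs, Finset.sum_const_zero]
    · simp only [condMutualInfo_piDist_map hμ₁, hβs, Finset.sum_const_zero]

theorem condIndepOrder_iid_general {Ω' : Type} [Fintype Ω'] {k : ℕ} {μ : ∀ i, Ω i → ℝ}
    {α : ∀ i, Ω i → A i} {β : ∀ i, Ω i → B i} (h : ∀ i, CondIndepOrder (μ i) (α i) (β i) k)
    {μ' : Ω' → ℝ} {α' : Ω' → ∀ i, A i} {β' : Ω' → ∀ i, B i}
    (hindep : ∀ a b, pr μ' (fun ω => α' ω = a ∧ β' ω = b) =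
      ∏ i, pr (μ i) (fun ω => α i ω = a i ∧ β i ω = b i)) :
    CondIndepOrder μ' α' β' k := by
  refine (CondIndepOrder.piMap h).of_sameJointLaw fun a b => ?_
  rw [hindep, pr_piDist_map_eq_and_map_eq]

end Product

/-- If `α` and `β` are conditionally independent of order `k` and
`(α₁,β₁), …, (α_n,β_n)` are i.i.d. pairs, each distributed as `(α, β)`, then
`αⁿ = (α₁,…,α_n)` and `βⁿ = (β₁,…,β_n)` are conditionally independent of order `k`. -/
theorem condIndepOrder_iid {Ω Ω' A B : Type} [Fintype Ω] [Fintype Ω']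
    (μ : Ω → ℝ) (hμ : IsProb μ) (α : Ω → A) (β : Ω → B) (k : ℕ)
    (h : CondIndepOrder μ α β k) (n : ℕ)
    (μ' : Ω' → ℝ) (hμ' : IsProb μ') (αi : Fin n → Ω' → A) (βi : Fin n → Ω' → B)
    (hiid : ∀ (a : Fin n → A) (b : Fin n → B),
      pr μ' (fun ω => (∀ i, αi i ω = a i) ∧ (∀ i, βi i ω = b i)) =
        ∏ i, pr μ (fun ω => α ω = a i ∧ β ω = b i)) :
    CondIndepOrder μ' (fun ω i => αi i ω) (fun ω i => βi i ω) k :=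
  condIndepOrder_iid_general (fun _ => h) fun a b => by simpa only [funext_iff] using hiid a b
end

section
/- Let α and β be random variables on a finite probability space that are conditionally independent of order k, let f and g be functions defined on the value sets of α and β respectively, and set α' = f(α), β' = g(β). Then α' and β' are conditionally independent of order k. -/
open scoped BigOperators Classical

/-!
For `k = 0` the claim is that functions of independent variables are independent. For `k + 1`,
let `(α₀, β₀, α*, β*)` witness the hypothesis. Then `(f(α₀), g(β₀), α*, β*)` witnesses the
conclusion: the pair `α*, β*` is untouched, and `I(f(α₀) : g(β₀) | γ) ≤ I(α₀ : β₀ | γ) = 0` for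
`γ = α*, β*`. This data processing inequality follows from the chain rule
`I(X : Y | Z) = I(f(X) : Y | Z) + I(X : Y | f(X), Z)` and the nonnegativity of conditional mutual
information, which is Gibbs' inequality for the joint law of `(X, Y, Z)` against the
law `P(x, z) P(y, z) / P(z)`.
-/

section Law

variable {Ω Ω' A B D D' : Type} [Fintype Ω] [Fintype Ω'] {μ : Ω → ℝ}

/-- The law of the random variable `X`, i.e. the point masses `d ↦ P(X = d)`, as a function on
the whole (possibly infinite) value type. Laws of several random variables are laws of tuples. -/
noncomputable def law (μ : Ω → ℝ) (X : Ω → D) (d : D) : ℝ :=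
  pr μ fun ω => X ω = d

lemma law_eq_sum_filter (μ : Ω → ℝ) (X : Ω → D) (d : D) :
    law μ X d = ∑ ω with X ω = d, μ ω :=
  (Finset.sum_filter _ _).symm

lemma law_nonneg (hμ : ∀ ω, 0 ≤ μ ω) (X : Ω → D) (d : D) : 0 ≤ law μ X d := by
  rw [law_eq_sum_filter]
  exact Finset.sum_nonneg fun ω _ => hμ ω

lemma law_apply_pos (hμ : ∀ ω, 0 ≤ μ ω) (X : Ω → D) {ω : Ω} (hω : 0 < μ ω) :
    0 < law μ X (X ω) := by
  rw [law_eq_sum_filter]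
  exact Finset.sum_pos' (fun ω' _ => hμ ω') ⟨ω, by simp, hω⟩

lemma law_prodMk (μ : Ω → ℝ) (X : Ω → A) (Y : Ω → B) (a : A) (b : B) :
    law μ (fun ω => (X ω, Y ω)) (a, b) = pr μ fun ω => X ω = a ∧ Y ω = b := by
  simp only [law, Prod.mk.injEq]

lemma sum_mul_comp_eq_sum_law_mul (μ : Ω → ℝ) {X : Ω → D} {S : Finset D} (hS : ∀ ω, X ω ∈ S)
    (F : D → ℝ) : ∑ ω, μ ω * F (X ω) = ∑ d ∈ S, law μ X d * F d := by
  rw [← Finset.sum_fiberwise_of_maps_to fun ω _ => hS ω]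
  refine Finset.sum_congr rfl fun d _ => ?_
  rw [law_eq_sum_filter, Finset.sum_mul]
  refine Finset.sum_congr rfl fun ω hω => ?_
  rw [(Finset.mem_filter.mp hω).2]

lemma sum_law (μ : Ω → ℝ) {X : Ω → D} {S : Finset D} (hS : ∀ ω, X ω ∈ S) :
    ∑ d ∈ S, law μ X d = ∑ ω, μ ω := by
  simpa only [mul_one] using (sum_mul_comp_eq_sum_law_mul μ hS fun _ => 1).symm

lemma sum_law_prodMk (μ : Ω → ℝ) {X : Ω → A} {S : Finset A} (hS : ∀ ω, X ω ∈ S) (Y : Ω → B)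
    (b : B) : ∑ a ∈ S, law μ (fun ω => (X ω, Y ω)) (a, b) = law μ Y b := by
  rw [law_eq_sum_filter, ← Finset.sum_fiberwise_of_maps_to fun ω _ => hS ω]
  refine Finset.sum_congr rfl fun a _ => ?_
  simp only [law_eq_sum_filter, Finset.filter_filter, Prod.mk.injEq, and_comm]

lemma law_comp_eq_sum_law (μ : Ω → ℝ) {X : Ω → D} {S : Finset D} (hS : ∀ ω, X ω ∈ S)
    (f : D → D') (d' : D') : law μ (f ∘ X) d' = ∑ d ∈ S with f d = d', law μ X d := by
  have h := sum_mul_comp_eq_sum_law_mul μ hS fun d => if f d = d' then 1 else 0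
  simpa only [mul_ite, mul_one, mul_zero, ← Finset.sum_filter, ← law_eq_sum_filter,
    Function.comp_def] using h

lemma law_comp_congr {μ' : Ω' → ℝ} {X : Ω → D} {X' : Ω' → D} (h : law μ' X' = law μ X)
    (f : D → D') : law μ' (f ∘ X') = law μ (f ∘ X) := by
  funext d'
  let S := Finset.univ.image X ∪ Finset.univ.image X'
  have hX : ∀ ω, X ω ∈ S := fun ω => by simp [S]
  have hX' : ∀ ω, X' ω ∈ S := fun ω => by simp [S]
  rw [law_comp_eq_sum_law μ hX, law_comp_eq_sum_law μ' hX', h]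

end Law

section Independence

variable {Ω Ω' A A' B B' : Type} [Fintype Ω] [Fintype Ω'] {μ : Ω → ℝ} {X : Ω → A} {Y : Ω → B}

lemma pr_and_comp_congr {μ' : Ω' → ℝ} {X' : Ω' → A} {Y' : Ω' → B}
    (h : ∀ a b, pr μ' (fun ω => X' ω = a ∧ Y' ω = b) = pr μ (fun ω => X ω = a ∧ Y ω = b))
    (f : A → A') (g : B → B') (a : A') (b : B') :
    pr μ' (fun ω => f (X' ω) = a ∧ g (Y' ω) = b) =
      pr μ (fun ω => f (X ω) = a ∧ g (Y ω) = b) := by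
  have hlaw : law μ' (fun ω => (X' ω, Y' ω)) = law μ (fun ω => (X ω, Y ω)) := by
    funext ⟨a, b⟩
    rw [law_prodMk, law_prodMk, h]
  rw [← law_prodMk, ← law_prodMk]
  exact congrFun (law_comp_congr hlaw (Prod.map f g)) (a, b)

lemma Indep.comp (h : Indep μ X Y) (f : A → A') (g : B → B') : Indep μ (f ∘ X) (g ∘ Y) := by
  intro a b
  have hlaw : ∀ x y, law μ (fun ω => (X ω, Y ω)) (x, y) = law μ X x * law μ Y y :=
    fun x y => (law_prodMk μ X Y x y).trans (h x y)
  let S := Finset.univ.image X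
  let T := Finset.univ.image Y
  have hS : ∀ ω, X ω ∈ S := fun ω => by simp [S]
  have hT : ∀ ω, Y ω ∈ T := fun ω => by simp [T]
  have hST : ∀ ω, (X ω, Y ω) ∈ S ×ˢ T := fun ω => Finset.mk_mem_product (hS ω) (hT ω)
  calc pr μ (fun ω => (f ∘ X) ω = a ∧ (g ∘ Y) ω = b)
      = law μ (Prod.map f g ∘ fun ω => (X ω, Y ω)) (a, b) := (law_prodMk μ _ _ a b).symm
    _ = ∑ p ∈ S ×ˢ T with f p.1 = a ∧ g p.2 = b, law μ (fun ω => (X ω, Y ω)) p := by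
        simp only [law_comp_eq_sum_law μ hST, Prod.map, Prod.mk.injEq]
    _ = ∑ x ∈ S with f x = a, ∑ y ∈ T with g y = b, law μ X x * law μ Y y := by
        simp only [Finset.sum_filter, Finset.sum_product, hlaw, ite_and, Finset.sum_ite_irrel,
          Finset.sum_const_zero]
    _ = law μ (f ∘ X) a * law μ (g ∘ Y) b := by
        rw [law_comp_eq_sum_law μ hS, law_comp_eq_sum_law μ hT, Finset.sum_mul_sum]

end Independence

section ConditionalMutualInformation

variable {Ω A A' B B' C : Type} [Fintype Ω] {μ : Ω → ℝ}

lemma ent_eq_neg_sum_mul_logb_law (μ : Ω → ℝ) (X : Ω → A) :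
    ent μ X = -∑ ω, μ ω * Real.logb 2 (law μ X (X ω)) := by
  have hX : ∀ ω, X ω ∈ Finset.univ.image X := fun ω => by simp
  rw [sum_mul_comp_eq_sum_law_mul μ hX fun a => Real.logb 2 (law μ X a)]
  rfl

lemma ent_congr_of_eq_iff_eq (μ : Ω → ℝ) {X : Ω → A} {Y : Ω → B}
    (h : ∀ ω ω', X ω = X ω' ↔ Y ω = Y ω') : ent μ X = ent μ Y := by
  simp only [ent_eq_neg_sum_mul_logb_law, law, h]

/-- The ratio `P(x, z) P(y, z) / (P(x, y, z) P(z))` between the mass that `(x, y, z)` would have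
if `X` and `Y` were independent given `Z` and its actual mass. It is `0` wherever the actual
mass vanishes. -/
noncomputable def condIndepRatio (μ : Ω → ℝ) (X : Ω → A) (Y : Ω → B) (Z : Ω → C)
    (p : (A × B) × C) : ℝ :=
  law μ (fun ω => (X ω, Z ω)) (p.1.1, p.2) * law μ (fun ω => (Y ω, Z ω)) (p.1.2, p.2) /
    (law μ (fun ω => ((X ω, Y ω), Z ω)) p * law μ Z p.2)

lemma condIndepRatio_apply_pos (hμ : ∀ ω, 0 ≤ μ ω) (X : Ω → A) (Y : Ω → B) (Z : Ω → C)
    {ω : Ω} (hω : 0 < μ ω) : 0 < condIndepRatio μ X Y Z ((X ω, Y ω), Z ω) :=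
  div_pos
    (mul_pos (law_apply_pos hμ (fun ω => (X ω, Z ω)) hω)
      (law_apply_pos hμ (fun ω => (Y ω, Z ω)) hω))
    (mul_pos (law_apply_pos hμ (fun ω => ((X ω, Y ω), Z ω)) hω) (law_apply_pos hμ Z hω))

lemma law_mul_condIndepRatio_le (hμ : ∀ ω, 0 ≤ μ ω) (X : Ω → A) (Y : Ω → B) (Z : Ω → C)
    (x : A) (y : B) (z : C) :
    law μ (fun ω => ((X ω, Y ω), Z ω)) ((x, y), z) * condIndepRatio μ X Y Z ((x, y), z) ≤
      law μ (fun ω => (X ω, Z ω)) (x, z) * law μ (fun ω => (Y ω, Z ω)) (y, z) / law μ Z z := by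
  rcases eq_or_ne (law μ (fun ω => ((X ω, Y ω), Z ω)) ((x, y), z)) 0 with hzero | hne
  · rw [hzero, zero_mul]
    exact div_nonneg (mul_nonneg (law_nonneg hμ _ _) (law_nonneg hμ _ _)) (law_nonneg hμ _ _)
  · rw [condIndepRatio, ← mul_div_assoc, mul_div_mul_left _ _ hne]

lemma sum_mul_condIndepRatio_le (hμ : ∀ ω, 0 ≤ μ ω) (X : Ω → A) (Y : Ω → B) (Z : Ω → C) :
    ∑ ω, μ ω * condIndepRatio μ X Y Z ((X ω, Y ω), Z ω) ≤ ∑ ω, μ ω := by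
  let S := Finset.univ.image X
  let T := Finset.univ.image Y
  let U := Finset.univ.image Z
  have hS : ∀ ω, X ω ∈ S := fun ω => by simp [S]
  have hT : ∀ ω, Y ω ∈ T := fun ω => by simp [T]
  have hU : ∀ ω, Z ω ∈ U := fun ω => by simp [U]
  have hSTU : ∀ ω, ((X ω, Y ω), Z ω) ∈ (S ×ˢ T) ×ˢ U := fun ω =>
    Finset.mk_mem_product (Finset.mk_mem_product (hS ω) (hT ω)) (hU ω)
  calc ∑ ω, μ ω * condIndepRatio μ X Y Z ((X ω, Y ω), Z ω)
      = ∑ z ∈ U, ∑ x ∈ S, ∑ y ∈ T, law μ (fun ω => ((X ω, Y ω), Z ω)) ((x, y), z) *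
          condIndepRatio μ X Y Z ((x, y), z) := by
        rw [sum_mul_comp_eq_sum_law_mul μ hSTU, Finset.sum_product_right]
        simp only [Finset.sum_product]
    _ ≤ ∑ z ∈ U, ∑ x ∈ S, ∑ y ∈ T, law μ (fun ω => (X ω, Z ω)) (x, z) *
          law μ (fun ω => (Y ω, Z ω)) (y, z) / law μ Z z := by
        gcongr
        exact law_mul_condIndepRatio_le hμ X Y Z _ _ _
    _ = ∑ z ∈ U, law μ Z z * law μ Z z / law μ Z z := by
        simp only [← Finset.sum_div, ← Finset.sum_mul_sum, sum_law_prodMk μ hS,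
          sum_law_prodMk μ hT]
    _ = ∑ ω, μ ω := by
        simp only [mul_self_div_self, sum_law μ hU]

lemma condMutualInfo_eq_neg_sum_mul_logb (hμ : ∀ ω, 0 ≤ μ ω) (X : Ω → A) (Y : Ω → B)
    (Z : Ω → C) :
    condMutualInfo μ X Y Z =
      -∑ ω, μ ω * Real.logb 2 (condIndepRatio μ X Y Z ((X ω, Y ω), Z ω)) := by
  have hlogb : ∀ ω, μ ω * Real.logb 2 (condIndepRatio μ X Y Z ((X ω, Y ω), Z ω)) =
      μ ω * Real.logb 2 (law μ (fun ω => (X ω, Z ω)) (X ω, Z ω)) +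
        μ ω * Real.logb 2 (law μ (fun ω => (Y ω, Z ω)) (Y ω, Z ω)) -
        (μ ω * Real.logb 2 (law μ (fun ω => ((X ω, Y ω), Z ω)) ((X ω, Y ω), Z ω)) +
          μ ω * Real.logb 2 (law μ Z (Z ω))) := by
    intro ω
    rcases (hμ ω).eq_or_lt with hzero | hpos
    · simp [← hzero]
    have hXZ := (law_apply_pos hμ (fun ω => (X ω, Z ω)) hpos).ne'
    have hYZ := (law_apply_pos hμ (fun ω => (Y ω, Z ω)) hpos).ne'
    have hXYZ := (law_apply_pos hμ (fun ω => ((X ω, Y ω), Z ω)) hpos).ne'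
    have hZ := (law_apply_pos hμ Z hpos).ne'
    rw [condIndepRatio, Real.logb_div (mul_ne_zero hXZ hYZ) (mul_ne_zero hXYZ hZ),
      Real.logb_mul hXZ hYZ, Real.logb_mul hXYZ hZ]
    ring
  simp only [condMutualInfo, condEnt, ent_eq_neg_sum_mul_logb_law, hlogb,
    Finset.sum_sub_distrib, Finset.sum_add_distrib]
  ring

theorem condMutualInfo_nonneg (hμ : ∀ ω, 0 ≤ μ ω) (X : Ω → A) (Y : Ω → B) (Z : Ω → C) :
    0 ≤ condMutualInfo μ X Y Z := by
  have hlog2 : 0 < Real.log 2 := Real.log_pos one_lt_two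
  have hlogb : ∀ ω, μ ω * Real.logb 2 (condIndepRatio μ X Y Z ((X ω, Y ω), Z ω)) ≤
      μ ω * ((condIndepRatio μ X Y Z ((X ω, Y ω), Z ω) - 1) / Real.log 2) := by
    intro ω
    rcases (hμ ω).eq_or_lt with hzero | hpos
    · simp [← hzero]
    rw [Real.logb]
    gcongr
    exact Real.log_le_sub_one_of_pos (condIndepRatio_apply_pos hμ X Y Z hpos)
  rw [condMutualInfo_eq_neg_sum_mul_logb hμ, neg_nonneg]
  calc ∑ ω, μ ω * Real.logb 2 (condIndepRatio μ X Y Z ((X ω, Y ω), Z ω))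
      ≤ ∑ ω, μ ω * ((condIndepRatio μ X Y Z ((X ω, Y ω), Z ω) - 1) / Real.log 2) :=
        Finset.sum_le_sum fun ω _ => hlogb ω
    _ = (∑ ω, μ ω * condIndepRatio μ X Y Z ((X ω, Y ω), Z ω) - ∑ ω, μ ω) / Real.log 2 := by
        simp only [← mul_div_assoc, ← Finset.sum_div, mul_sub_one, Finset.sum_sub_distrib]
    _ ≤ 0 := div_nonpos_of_nonpos_of_nonneg
        (sub_nonpos.mpr (sum_mul_condIndepRatio_le hμ X Y Z)) hlog2.le

lemma condMutualInfo_comm (μ : Ω → ℝ) (X : Ω → A) (Y : Ω → B) (Z : Ω → C) :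
    condMutualInfo μ X Y Z = condMutualInfo μ Y X Z := by
  have hswap : ent μ (fun ω => ((X ω, Y ω), Z ω)) = ent μ (fun ω => ((Y ω, X ω), Z ω)) :=
    ent_congr_of_eq_iff_eq μ fun ω ω' => by grind
  simp only [condMutualInfo, condEnt, hswap]
  ring

lemma condMutualInfo_eq_comp_add (μ : Ω → ℝ) (X : Ω → A) (Y : Ω → B) (Z : Ω → C) (f : A → A') :
    condMutualInfo μ X Y Z =
      condMutualInfo μ (f ∘ X) Y Z + condMutualInfo μ X Y (fun ω => (f (X ω), Z ω)) := by
  have hX : ent μ (fun ω => (X ω, f (X ω), Z ω)) = ent μ (fun ω => (X ω, Z ω)) :=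
    ent_congr_of_eq_iff_eq μ fun ω ω' => by grind
  have hXY : ent μ (fun ω => ((X ω, Y ω), f (X ω), Z ω)) = ent μ (fun ω => ((X ω, Y ω), Z ω)) :=
    ent_congr_of_eq_iff_eq μ fun ω ω' => by grind
  have hfXY : ent μ (fun ω => (Y ω, f (X ω), Z ω)) = ent μ (fun ω => ((f (X ω), Y ω), Z ω)) :=
    ent_congr_of_eq_iff_eq μ fun ω ω' => by grind
  simp only [condMutualInfo, condEnt, Function.comp_apply, hX, hXY, hfXY]
  ring

lemma condMutualInfo_comp_left_le (hμ : ∀ ω, 0 ≤ μ ω) (X : Ω → A) (Y : Ω → B) (Z : Ω → C)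
    (f : A → A') : condMutualInfo μ (f ∘ X) Y Z ≤ condMutualInfo μ X Y Z := by
  rw [condMutualInfo_eq_comp_add μ X Y Z f]
  exact le_add_of_nonneg_right (condMutualInfo_nonneg hμ _ _ _)

theorem condMutualInfo_comp_le (hμ : ∀ ω, 0 ≤ μ ω) (X : Ω → A) (Y : Ω → B) (Z : Ω → C)
    (f : A → A') (g : B → B') :
    condMutualInfo μ (f ∘ X) (g ∘ Y) Z ≤ condMutualInfo μ X Y Z :=
  calc condMutualInfo μ (f ∘ X) (g ∘ Y) Z
      ≤ condMutualInfo μ X (g ∘ Y) Z := condMutualInfo_comp_left_le hμ X (g ∘ Y) Z f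
    _ = condMutualInfo μ (g ∘ Y) X Z := condMutualInfo_comm μ X (g ∘ Y) Z
    _ ≤ condMutualInfo μ Y X Z := condMutualInfo_comp_left_le hμ Y X Z g
    _ = condMutualInfo μ X Y Z := condMutualInfo_comm μ Y X Z

lemma condMutualInfo_comp_eq_zero (hμ : ∀ ω, 0 ≤ μ ω) {X : Ω → A} {Y : Ω → B} {Z : Ω → C}
    (h : condMutualInfo μ X Y Z = 0) (f : A → A') (g : B → B') :
    condMutualInfo μ (f ∘ X) (g ∘ Y) Z = 0 :=
  le_antisymm ((condMutualInfo_comp_le hμ X Y Z f g).trans_eq h) (condMutualInfo_nonneg hμ _ _ _)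

end ConditionalMutualInformation

/-- If `α` and `β` are conditionally independent of order `k` and
`f`, `g` are functions on their value sets, then `α' = f(α)` and `β' = g(β)` are
conditionally independent of order `k`. -/
theorem condIndepOrder_comp {Ω A B A' B' : Type} [Fintype Ω]
    (μ : Ω → ℝ) (hμ : IsProb μ) (α : Ω → A) (β : Ω → B)
    (f : A → A') (g : B → B') (k : ℕ) (h : CondIndepOrder μ α β k) :
    CondIndepOrder μ (fun ω => f (α ω)) (fun ω => g (β ω)) k := by
  cases k with
  | zero => exact Indep.comp h f g
  | succ k =>
    obtain ⟨Ω', C, D, _, μ', α₀, β₀, αs, βs, hμ', hjoint, hαs, hβs, hk⟩ := h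
    exact ⟨Ω', C, D, _, μ', f ∘ α₀, g ∘ β₀, αs, βs, hμ',
      pr_and_comp_congr hjoint f g,
      condMutualInfo_comp_eq_zero hμ'.1 hαs f g,
      condMutualInfo_comp_eq_zero hμ'.1 hβs f g,
      hk⟩
end
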